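/- arXiv:1007.3118 — 2 statements merged into one kernel-verified Lean document; each statement's English description precedes it below -/
import Mathlib

section
/- Let g be a finite-dimensional real Lie algebra and let Dg be the differential graded Lie algebra defined as the semidirect sum of g with the free graded Lie algebra on S⁺g, with differential determined by d l(x)=0 and d i(x)=[i(x),i(x)]/2+l(x). Then Dg is acyclic as a cochain complex, i.e. all of its cohomology groups vanish. -/
noncomputable section

/-- A differential graded Lie algebra (DGLA) over `ℝ`: a `ℤ`-graded real vector space with a
degree-0 graded Lie bracket and a degree `+1` differential which is a graded derivation
of the bracket. -/
structure DGLA where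
  carrier : Type
  [acg : AddCommGroup carrier]
  [mod : Module ℝ carrier]
  grade : ℤ → Submodule ℝ carrier
  isInternal : DirectSum.IsInternal grade
  bracket : carrier →ₗ[ℝ] carrier →ₗ[ℝ] carrier
  d : carrier →ₗ[ℝ] carrier
  bracket_grade : ∀ (i j : ℤ), ∀ a ∈ grade i, ∀ b ∈ grade j, bracket a b ∈ grade (i + j)
  d_grade : ∀ (i : ℤ), ∀ a ∈ grade i, d a ∈ grade (i + 1)
  d_sq : ∀ a, d (d a) = 0
  antisymm : ∀ (i j : ℤ), ∀ a ∈ grade i, ∀ b ∈ grade j,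
    bracket a b = -((-1 : ℝ) ^ (i * j)) • bracket b a
  jacobi : ∀ (i j : ℤ), ∀ a ∈ grade i, ∀ b ∈ grade j, ∀ c,
    bracket a (bracket b c)
      = bracket (bracket a b) c + ((-1 : ℝ) ^ (i * j)) • bracket b (bracket a c)
  leibniz : ∀ (i : ℤ), ∀ a ∈ grade i, ∀ b,
    d (bracket a b) = bracket (d a) b + ((-1 : ℝ) ^ i) • bracket a (d b)

attribute [instance] DGLA.acg DGLA.mod

namespace DGLA

/-- Closed elements of degree `n`. -/
def closed (D : DGLA) (n : ℤ) : Submodule ℝ D.carrier := D.grade n ⊓ LinearMap.ker D.d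

/-- Exact elements of degree `n`. -/
def exact (D : DGLA) (n : ℤ) : Submodule ℝ D.carrier :=
  D.grade n ⊓ Submodule.map D.d (D.grade (n - 1))

/-- A DGLA is acyclic when every closed element is exact, i.e. all cohomology vanishes. -/
def IsAcyclic (D : DGLA) : Prop := ∀ n : ℤ, D.closed n ≤ D.exact n

/-- The smallest subspace containing `S` and stable under the bracket. -/
def lieSpan (D : DGLA) (S : Set D.carrier) : Submodule ℝ D.carrier :=
  sInf {p : Submodule ℝ D.carrier | S ⊆ p ∧ ∀ a ∈ p, ∀ b ∈ p, D.bracket a b ∈ p}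

end DGLA
/-- A presentation of the DGLA `Dg = g ⋉ 𝓛(S⁺g)` attached to a Lie algebra `g`:
`l x` are the degree-0 generators, and for `k : ℕ` the symmetric multilinear map
`J k` encodes the generators `𝓘(u)` for `u ∈ S^(k+1) g` (of degree `1 - 2(k+1)`),
via `J k (x, …, x) = 𝓘(x^(k+1))`.  The differential satisfies `d l(x) = 0` and
`d i(x) = [i(x), i(x)]/2 + l(x)` for the generating function `i(x) = ∑ₖ 𝓘(xᵏ)`.
The fields `generates` and `free` express that `𝓛(S⁺g)` is the free graded Lie
algebra on `S⁺g` and that `Dg` is the corresponding semidirect sum. -/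
structure DgPresentation (g : Type) [LieRing g] [LieAlgebra ℝ g] (D : DGLA) where
  l : g →ₗ[ℝ] D.carrier
  J : (k : ℕ) → MultilinearMap ℝ (fun _ : Fin (k + 1) => g) D.carrier
  J_symm : ∀ (k : ℕ) (v : Fin (k + 1) → g) (σ : Equiv.Perm (Fin (k + 1))),
    J k (v ∘ σ) = J k v
  l_grade : ∀ x, l x ∈ D.grade 0
  J_grade : ∀ (k : ℕ) (v : Fin (k + 1) → g), J k v ∈ D.grade (1 - 2 * ((k : ℤ) + 1))
  bracket_ll : ∀ x y, D.bracket (l x) (l y) = l ⁅x, y⁆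
  bracket_lJ : ∀ (k : ℕ) (x : g) (v : Fin (k + 1) → g),
    D.bracket (l x) (J k v) = ∑ j : Fin (k + 1), J k (Function.update v j ⁅x, v j⁆)
  d_l : ∀ x, D.d (l x) = 0
  d_J_one : ∀ x : g, D.d (J 0 (fun _ => x)) = l x
  d_J : ∀ (k : ℕ) (x : g),
    D.d (J (k + 1) (fun _ => x)) =
      (1 / 2 : ℝ) • ∑ s ∈ Finset.range (k + 1),
        D.bracket (J s (fun _ => x)) (J (k - s) (fun _ => x))
  generates :
    D.lieSpan (Set.range l ∪ {a | ∃ (k : ℕ) (v : Fin (k + 1) → g), a = J k v}) = ⊤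
  free : ∀ (B : DGLA) (l' : g →ₗ[ℝ] B.carrier)
      (J' : (k : ℕ) → MultilinearMap ℝ (fun _ : Fin (k + 1) => g) B.carrier),
      (∀ (k : ℕ) (v : Fin (k + 1) → g) (σ : Equiv.Perm (Fin (k + 1))), J' k (v ∘ σ) = J' k v) →
      (∀ x, l' x ∈ B.grade 0) →
      (∀ (k : ℕ) (v : Fin (k + 1) → g), J' k v ∈ B.grade (1 - 2 * ((k : ℤ) + 1))) →
      (∀ x y, B.bracket (l' x) (l' y) = l' ⁅x, y⁆) →
      (∀ (k : ℕ) (x : g) (v : Fin (k + 1) → g),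
        B.bracket (l' x) (J' k v) = ∑ j : Fin (k + 1), J' k (Function.update v j ⁅x, v j⁆)) →
      ∃! φ : D.carrier →ₗ[ℝ] B.carrier,
        (∀ a b, φ (D.bracket a b) = B.bracket (φ a) (φ b)) ∧
        (∀ (n : ℤ), ∀ a ∈ D.grade n, φ a ∈ B.grade n) ∧
        (∀ x, φ (l x) = l' x) ∧
        (∀ (k : ℕ) (v : Fin (k + 1) → g), φ (J k v) = J' k v)

section PolyLemmas

set_option linter.unusedSimpArgs false

variable {V : Type*} [AddCommGroup V] [Module ℝ V]

/-- polynomial functions `ℝ → V` -/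
def polF (V : Type*) [AddCommGroup V] [Module ℝ V] : Submodule ℝ (ℝ → V) :=
  Submodule.span ℝ {F | ∃ (i : ℕ) (c : V), F = fun t => t ^ i • c}

/-- `F t = a + t b + O(t²)` for a polynomial function -/
def HasLin (F : ℝ → V) (a b : V) : Prop :=
  ∃ G ∈ polF V, ∀ t, F t = a + t • b + t ^ 2 • G t

theorem polF_mono (i : ℕ) (c : V) : (fun t : ℝ => t ^ i • c) ∈ polF V :=
  Submodule.subset_span ⟨i, c, rfl⟩

theorem polF_pow_smul (i : ℕ) {G : ℝ → V} (hG : G ∈ polF V) :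
    (fun t : ℝ => t ^ i • G t) ∈ polF V := by
  induction hG using Submodule.span_induction with
  | mem x h =>
    obtain ⟨j, c, rfl⟩ := h
    simp only [smul_smul, ← pow_add]
    exact polF_mono _ _
  | zero => simp only [Pi.zero_apply, map_zero, LinearMap.zero_apply, smul_zero]; exact (polF V).zero_mem
  | add x y _ _ hx hy =>
    have := (polF V).add_mem hx hy
    convert this using 1
    ext t; simp
  | smul a x _ hx =>
    have := (polF V).smul_mem a hx
    convert this using 1
    ext t; simp only [Pi.smul_apply]; rw [smul_comm]

theorem polF_comp {W : Type*} [AddCommGroup W] [Module ℝ W] (f : V →ₗ[ℝ] W) {G : ℝ → V}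
    (hG : G ∈ polF V) : (fun t : ℝ => f (G t)) ∈ polF W := by
  induction hG using Submodule.span_induction with
  | mem x h =>
    obtain ⟨j, c, rfl⟩ := h
    simp only [map_smul]
    exact polF_mono _ _
  | zero => simp only [Pi.zero_apply, map_zero]; exact (polF W).zero_mem
  | add x y _ _ hx hy =>
    have := (polF W).add_mem hx hy
    convert this using 1
    ext t; simp
  | smul a x _ hx =>
    have := (polF W).smul_mem a hx
    convert this using 1
    ext t; simp

theorem polF_bilin (f : V →ₗ[ℝ] V →ₗ[ℝ] V) {G H : ℝ → V}
    (hG : G ∈ polF V) (hH : H ∈ polF V) : (fun t : ℝ => f (G t) (H t)) ∈ polF V := by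
  induction hG using Submodule.span_induction with
  | mem x h =>
    obtain ⟨j, c, rfl⟩ := h
    simp only [map_smul, LinearMap.smul_apply]
    exact polF_pow_smul _ (polF_comp (f c) hH)
  | zero => simp only [Pi.zero_apply, map_zero, LinearMap.zero_apply, smul_zero]; exact (polF V).zero_mem
  | add x y _ _ hx hy =>
    have := (polF V).add_mem hx hy
    convert this using 1
    ext t; simp
  | smul a x _ hx =>
    have := (polF V).smul_mem a hx
    convert this using 1
    ext t; simp

theorem HasLin.map {W : Type*} [AddCommGroup W] [Module ℝ W] (f : V →ₗ[ℝ] W) {F : ℝ → V}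
    {a b : V} (h : HasLin F a b) : HasLin (fun t => f (F t)) (f a) (f b) := by
  obtain ⟨G, hG, e⟩ := h
  exact ⟨_, polF_comp f hG, fun t => by simp [e]⟩

theorem HasLin.bilin (f : V →ₗ[ℝ] V →ₗ[ℝ] V) {F F' : ℝ → V}
    {a b a' b' : V} (h : HasLin F a b) (h' : HasLin F' a' b') :
    HasLin (fun t => f (F t) (F' t)) (f a a') (f b a' + f a b') := by
  obtain ⟨G, hG, e⟩ := h
  obtain ⟨G', hG', e'⟩ := h'
  have c1 (c : V) : (fun _ : ℝ => c) ∈ polF V := by simpa using polF_mono (V := V) 0 c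
  have k1 := polF_bilin f (c1 b) (c1 b')
  have k2 := polF_bilin f (c1 a) hG'
  have k3 := polF_bilin f hG (c1 a')
  have k4 := polF_pow_smul 1 (polF_bilin f (c1 b) hG')
  have k5 := polF_pow_smul 1 (polF_bilin f hG (c1 b'))
  have k6 := polF_pow_smul 2 (polF_bilin f hG hG')
  refine ⟨_, add_mem (add_mem (add_mem k1 k2) (add_mem k3 k4)) (add_mem k5 k6), fun t => ?_⟩
  simp only [e, e', map_add, map_smul, LinearMap.add_apply, LinearMap.smul_apply, Pi.add_apply]
  module

theorem HasLin.sum {ι : Type*} (s : Finset ι) {F : ι → ℝ → V} {a b : ι → V}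
    (h : ∀ i ∈ s, HasLin (F i) (a i) (b i)) :
    HasLin (fun t => ∑ i ∈ s, F i t) (∑ i ∈ s, a i) (∑ i ∈ s, b i) := by
  classical
  induction s using Finset.induction_on with
  | empty => exact ⟨0, zero_mem _, by simp⟩
  | insert i s hi ih =>
    obtain ⟨G, hG, e⟩ := ih (fun j hj => h j (Finset.mem_insert_of_mem hj))
    obtain ⟨G', hG', e'⟩ := h i (Finset.mem_insert_self _ _)
    refine ⟨_, add_mem hG hG', fun t => ?_⟩
    simp only [Finset.sum_insert hi, e, e', Pi.add_apply]
    module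

theorem polF_real {G : ℝ → ℝ} (hG : G ∈ polF ℝ) :
    ∃ p : Polynomial ℝ, ∀ t, G t = p.eval t := by
  induction hG using Submodule.span_induction with
  | mem x h =>
    obtain ⟨j, c, rfl⟩ := h
    exact ⟨Polynomial.X ^ j * Polynomial.C c, fun t => by simp only [smul_eq_mul, Polynomial.eval_mul, Polynomial.eval_pow, Polynomial.eval_X, Polynomial.eval_C]⟩
  | zero => exact ⟨0, by simp⟩
  | add x y _ _ hx hy =>
    obtain ⟨p, hp⟩ := hx
    obtain ⟨q, hq⟩ := hy
    exact ⟨p + q, by simp [hp, hq]⟩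
  | smul a x _ hx =>
    obtain ⟨p, hp⟩ := hx
    exact ⟨Polynomial.C a * p, by simp [hp]⟩

theorem HasLin.mem (P : Submodule ℝ V) {F : ℝ → V} {a b : V} (h : HasLin F a b)
    (hF : ∀ t, F t ∈ P) : b ∈ P := by
  rw [← Submodule.Quotient.mk_eq_zero, ← Module.forall_dual_apply_eq_zero_iff ℝ]
  intro f
  obtain ⟨G, hG, e⟩ := h.map (f ∘ₗ P.mkQ)
  obtain ⟨p, hp⟩ := polF_real hG
  have h0 : ∀ t : ℝ, (Polynomial.C ((f ∘ₗ P.mkQ) a) + Polynomial.X * Polynomial.C ((f ∘ₗ P.mkQ) b)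
      + Polynomial.X ^ 2 * p).eval t = 0 := by
    intro t
    have h1 := e t
    have h2 : P.mkQ (F t) = 0 := by simpa using hF t
    simp only [LinearMap.comp_apply, h2, map_zero, smul_eq_mul, hp] at h1
    simp only [Polynomial.eval_add, Polynomial.eval_C, Polynomial.eval_mul, Polynomial.eval_X,
      Polynomial.eval_pow, LinearMap.comp_apply]
    exact h1.symm
  have h3 := Polynomial.funext (p := _) (q := 0) (fun t => (h0 t).trans (by simp))
  have h4 := congrArg (fun q => Polynomial.coeff q 1) h3
  simpa [Polynomial.coeff_X_pow_mul', Polynomial.coeff_C] using h4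

theorem HasLin.unique {F F' : ℝ → V} {a b a' b' : V} (h : HasLin F a b) (h' : HasLin F' a' b')
    (e : ∀ t, F t = F' t) : b = b' := by
  obtain ⟨G, hG, e1⟩ := h
  obtain ⟨G', hG', e2⟩ := h'
  have : HasLin (fun t => F t - F' t) (a - a') (b - b') := by
    refine ⟨_, sub_mem hG hG', fun t => ?_⟩
    simp only [e1, e2, Pi.sub_apply]
    module
  have := this.mem ⊥ (fun t => by simp [e])
  simpa [sub_eq_zero] using this

theorem hasLin_multilinear {g : Type*} [AddCommGroup g] [Module ℝ g] {n : ℕ}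
    (f : MultilinearMap ℝ (fun _ : Fin n => g) V) (v h : Fin n → g) :
    HasLin (fun t => f (v + t • h)) (f v) (∑ i, f (Function.update v i (h i))) := by
  classical
  have hm : ∀ s : Finset (Fin n), ∀ t : ℝ,
      f (s.piecewise (t • h) v) = t ^ s.card • f (s.piecewise h v) := by
    intro s t
    have := f.map_piecewise_smul (fun _ => t) (s.piecewise h v) s
    rw [Finset.prod_const] at this
    rw [← this]
    congr 1
    ext i
    by_cases hi : i ∈ s <;> simp [hi]
  refine ⟨fun t => ∑ s ∈ Finset.univ.filter (fun s : Finset (Fin n) => 2 ≤ s.card),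
    t ^ (s.card - 2) • f (s.piecewise h v), ?_, fun t => ?_⟩
  · have : (∑ s ∈ Finset.univ.filter (fun s : Finset (Fin n) => 2 ≤ s.card),
      (fun t : ℝ => t ^ (s.card - 2) • f (s.piecewise h v))) ∈ polF V :=
      sum_mem (fun s _ => polF_mono _ _)
    convert this using 1
    ext t; simp
  · beta_reduce
    rw [f.map_add_eq_map_add_linearDeriv_add, f.linearDeriv_apply, Finset.smul_sum,
      Finset.smul_sum]
    refine congrArg₂ (· + ·) (congrArg₂ (· + ·) rfl ?_) ?_
    · refine Finset.sum_congr rfl fun i _ => ?_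
      rw [Pi.smul_apply, f.map_update_smul]
    · refine Finset.sum_congr rfl fun s hs => ?_
      rw [hm, smul_smul, ← pow_add, Nat.add_sub_cancel' (by simpa using hs)]

/-- polarization -/
theorem polarization_mem {g : Type*} [AddCommGroup g] [Module ℝ g] {n : ℕ}
    (f : MultilinearMap ℝ (fun _ : Fin n => g) V)
    (hf : ∀ (v : Fin n → g) (σ : Equiv.Perm (Fin n)), f (v ∘ σ) = f v) (P : Submodule ℝ V)
    (hP : ∀ y, f (fun _ => y) ∈ P) (v : Fin n → g) : f v ∈ P := by
  have key : ∀ m : ℕ, ∀ (v : Fin n → g) (y : g), (∀ i : Fin n, m ≤ i → v i = y) → f v ∈ P := by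
    intro m
    induction m with
    | zero =>
      intro v y h
      have : v = fun _ => y := by ext i; exact h i (Nat.zero_le _)
      rw [this]; exact hP y
    | succ m ih =>
      intro v y h
      by_cases hm : m < n
      swap
      · exact ih v y (fun i hi => absurd i.2 (by omega))
      set i0 : Fin n := ⟨m, hm⟩
      let base := Function.update v i0 y
      let hh : Fin n → g := fun i => if m ≤ i then v i0 else 0
      have h1 := (hasLin_multilinear f base hh).mem P (by
        intro t
        refine ih _ (y + t • v i0) ?_
        intro i hi
        have : base i = y := by
          by_cases e : i = i0
          · simp [base, e]
          · have : (i : ℕ) ≠ m := fun e' => e (Fin.ext e')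
            simp only [base, Function.update_of_ne e]
            exact h i (by omega)
        simp [this, hh, hi])
      have h2 : ∀ i : Fin n, f (Function.update base i (hh i)) = if m ≤ i then f v else 0 := by
        intro i
        by_cases hi : m ≤ i
        · simp only [hi, if_true, hh]
          rw [← hf v (Equiv.swap i i0)]
          congr 1
          ext j
          by_cases e : j = i
          · subst e; simp
          · rw [Function.update_of_ne e]
            by_cases e' : j = i0
            · subst e'
              simp only [base, Function.update_self, Function.comp, Equiv.swap_apply_right]
              have : (i : ℕ) ≠ m := fun e' => e (Fin.ext e'.symm)
              exact (h i (by omega)).symm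
            · simp [base, e', Equiv.swap_apply_of_ne_of_ne e e']
        · simp only [hi, if_false, hh]
          exact f.map_coord_zero i (by simp)
      rw [Finset.sum_congr rfl (fun i _ => h2 i), ← Finset.sum_filter, Finset.sum_const,
        ← Nat.cast_smul_eq_nsmul ℝ] at h1
      refine (P.smul_mem_iff ?_).1 h1
      have : i0 ∈ Finset.univ.filter (fun i : Fin n => m ≤ (i : ℕ)) := by simp [i0]
      exact_mod_cast (Finset.card_pos.2 ⟨i0, this⟩).ne'
  exact key n v 0 (fun i hi => absurd i.2 (by omega))

end PolyLemmas
section GradedCommutator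

open DirectSum

variable {A : Type} [Ring A] [Algebra ℝ A] (H : ℤ → Submodule ℝ A)
  (hH : ∀ i j, ∀ a ∈ H i, ∀ b ∈ H j, a * b ∈ H (i + j))

/-- the graded commutator on homogeneous pieces -/
def gcomm (i j : ℤ) : H i →ₗ[ℝ] H j →ₗ[ℝ] H (i + j) :=
  LinearMap.mk₂ ℝ (fun a b => ⟨(a : A) * b - ((-1 : ℝ) ^ (i * j)) • ((b : A) * a),
    sub_mem (hH i j a a.2 b b.2)
      ((H (i + j)).smul_mem _ (by rw [add_comm]; exact hH j i b b.2 a a.2))⟩)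
    (by intro a a' b; ext; simp [add_mul, mul_add]; abel)
    (by intro c a b; ext; simp only [SetLike.val_smul, smul_mul_assoc, mul_smul_comm, smul_sub]; rw [smul_comm])
    (by intro a a' b; ext; simp [add_mul, mul_add]; abel)
    (by intro c a b; ext; simp only [SetLike.val_smul, smul_mul_assoc, mul_smul_comm, smul_sub]; rw [smul_comm])

def gbr : (⨁ i, H i) →ₗ[ℝ] (⨁ i, H i) →ₗ[ℝ] (⨁ i, H i) :=
  DirectSum.toModule ℝ ℤ _ (fun i => LinearMap.flip
    (DirectSum.toModule ℝ ℤ _ (fun j => LinearMap.flip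
      ((gcomm H hH i j).compr₂ (DirectSum.lof ℝ ℤ (fun i => H i) (i + j))))))

theorem gbr_lof (i j : ℤ) (a : H i) (b : H j) :
    gbr H hH (lof ℝ ℤ (fun i => H i) i a) (lof ℝ ℤ (fun i => H i) j b) =
      lof ℝ ℤ (fun i => H i) (i + j) (gcomm H hH i j a b) := by
  simp [gbr, DirectSum.toModule_lof]

theorem lof_congr {i j : ℤ} (e : i = j) (a : H i) (b : H j) (h : (a : A) = b) :
    lof ℝ ℤ (fun i => H i) i a = lof ℝ ℤ (fun i => H i) j b := by
  subst e
  congr 1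
  exact Subtype.ext h

theorem isInternal_range {M : Type} [AddCommGroup M] [Module ℝ M] (N : ℤ → Type)
    [∀ i, AddCommGroup (N i)] [∀ i, Module ℝ (N i)] (lo : ∀ i, N i →ₗ[ℝ] M)
    (co : ∀ i, M →ₗ[ℝ] N i) (h1 : ∀ i x, co i (lo i x) = x)
    (h2 : ∀ i j x, j ≠ i → co i (lo j x) = 0) 
    (h3 : ∀ (P : M → Prop), P 0 → (∀ i a, P (lo i a)) → (∀ x y, P x → P y → P (x + y)) →
      ∀ x, P x) :
    DirectSum.IsInternal (fun i => LinearMap.range (lo i)) := by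
  rw [DirectSum.isInternal_submodule_iff_iSupIndep_and_iSup_eq_top]
  refine ⟨?_, eq_top_iff.2 fun x _ => h3 (fun x => x ∈ ⨆ i, LinearMap.range (lo i)) (zero_mem _)
    (fun i a => Submodule.mem_iSup_of_mem i ⟨a, rfl⟩) (fun x y hx hy => add_mem hx hy) x⟩
  rw [iSupIndep_def]
  intro i
  rw [Submodule.disjoint_def]
  rintro x ⟨a, rfl⟩ hx
  have h1' : (⨆ j, ⨆ (_ : j ≠ i), LinearMap.range (lo j)) ≤ LinearMap.ker (co i) := by
    refine iSup₂_le fun j hj => ?_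
    rintro _ ⟨b, rfl⟩
    exact h2 i j b hj
  have h4 := h1' hx
  rw [LinearMap.mem_ker, h1] at h4
  simp [h4]

theorem neg_one_zpow_add (i j : ℤ) : (-1 : ℝ) ^ (i + j) = (-1) ^ i * (-1) ^ j :=
  zpow_add₀ (by norm_num) i j

theorem neg_one_zpow_sq (i : ℤ) : (-1 : ℝ) ^ i * (-1) ^ i = 1 := by
  rw [← neg_one_zpow_add, ← two_mul, zpow_mul]; simp

theorem mem_of_eq {i j : ℤ} (e : i = j) {a : A} (h : a ∈ H i) : a ∈ H j := e ▸ h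

theorem gbr_antisymm (i j : ℤ) (a : H i) (b : H j) :
    gbr H hH (lof ℝ ℤ (fun i => H i) i a) (lof ℝ ℤ (fun i => H i) j b) =
      -((-1 : ℝ) ^ (i * j)) •
        gbr H hH (lof ℝ ℤ (fun i => H i) j b) (lof ℝ ℤ (fun i => H i) i a) := by
  rw [gbr_lof, gbr_lof, ← map_smul]
  refine lof_congr H (add_comm i j) _ _ ?_
  simp only [gcomm, LinearMap.mk₂_apply, SetLike.val_smul]
  rw [mul_comm j i, smul_sub, smul_smul, neg_mul, neg_one_zpow_sq, neg_smul, neg_smul, one_smul]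
  abel

theorem gbr_jacobi_lof (i j k : ℤ) (a : H i) (b : H j) (c : H k) :
    gbr H hH (lof ℝ ℤ (fun i => H i) i a)
      (gbr H hH (lof ℝ ℤ (fun i => H i) j b) (lof ℝ ℤ (fun i => H i) k c)) =
    gbr H hH (gbr H hH (lof ℝ ℤ (fun i => H i) i a) (lof ℝ ℤ (fun i => H i) j b))
      (lof ℝ ℤ (fun i => H i) k c) + ((-1 : ℝ) ^ (i * j)) •
    gbr H hH (lof ℝ ℤ (fun i => H i) j b)
      (gbr H hH (lof ℝ ℤ (fun i => H i) i a) (lof ℝ ℤ (fun i => H i) k c)) := by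
  rw [gbr_lof, gbr_lof, gbr_lof, gbr_lof, gbr_lof, gbr_lof]
  have e2 : lof ℝ ℤ (fun i => H i) (i + j + k)
      (gcomm H hH (i + j) k (gcomm H hH i j a b) c) =
      lof ℝ ℤ (fun i => H i) (i + (j + k))
        ⟨_, mem_of_eq H (add_assoc i j k) (gcomm H hH (i + j) k (gcomm H hH i j a b) c).2⟩ :=
    lof_congr H (add_assoc i j k) _ _ rfl
  have e3 : lof ℝ ℤ (fun i => H i) (j + (i + k))
      (gcomm H hH j (i + k) b (gcomm H hH i k a c)) =
      lof ℝ ℤ (fun i => H i) (i + (j + k))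
        ⟨_, mem_of_eq H (add_left_comm j i k) (gcomm H hH j (i + k) b (gcomm H hH i k a c)).2⟩ :=
    lof_congr H (add_left_comm j i k) _ _ rfl
  rw [e2, e3, ← map_smul, ← map_add]
  refine lof_congr H rfl _ _ ?_
  simp only [gcomm, LinearMap.mk₂_apply, SetLike.val_smul, Submodule.coe_add]
  generalize (a : A) = a
  generalize (b : A) = b
  generalize (c : A) = c
  have hs := neg_one_zpow_sq (i * j)
  simp only [mul_add, add_mul, neg_one_zpow_add, mul_sub, sub_mul, smul_sub, smul_smul,
    mul_smul_comm, smul_mul_assoc, mul_assoc, mul_comm j i]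
  generalize (-1 : ℝ) ^ (i * j) = s at *
  generalize (-1 : ℝ) ^ (i * k) = t at *
  generalize (-1 : ℝ) ^ (j * k) = u at *
  have h1 (x : ℝ) : s * (s * x) = x := by rw [← mul_assoc, hs, one_mul]
  simp only [h1, mul_comm, mul_left_comm]
  module

theorem gbr_jacobi (i j : ℤ) (a : H i) (b : H j) (c : ⨁ i, H i) :
    gbr H hH (lof ℝ ℤ (fun i => H i) i a) (gbr H hH (lof ℝ ℤ (fun i => H i) j b) c) =
    gbr H hH (gbr H hH (lof ℝ ℤ (fun i => H i) i a) (lof ℝ ℤ (fun i => H i) j b)) c +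
    ((-1 : ℝ) ^ (i * j)) •
    gbr H hH (lof ℝ ℤ (fun i => H i) j b) (gbr H hH (lof ℝ ℤ (fun i => H i) i a) c) := by
  induction c using DirectSum.induction_on with
  | zero => simp only [map_zero, smul_zero, add_zero]
  | add x y hx hy =>
    rw [map_add, map_add, hx, hy, map_add, map_add, map_add, smul_add]
    abel
  | of k c => exact gbr_jacobi_lof H hH i j k a b c

/-- the underlying space of the graded commutator algebra -/
def GLc : Type := ⨁ i, H i

instance : AddCommMonoid (GLc H) := inferInstanceAs (AddCommMonoid (⨁ i, H i))
instance : Module ℝ (GLc H) := inferInstanceAs (Module ℝ (⨁ i, H i))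
instance : AddCommGroup (GLc H) := Module.addCommMonoidToAddCommGroup ℝ

def glof (i : ℤ) : H i →ₗ[ℝ] GLc H := lof ℝ ℤ (fun i => H i) i
def gcomp (i : ℤ) : GLc H →ₗ[ℝ] H i := DirectSum.component ℝ ℤ (fun i => H i) i
def gbrk : GLc H →ₗ[ℝ] GLc H →ₗ[ℝ] GLc H := gbr H hH
def gval : GLc H →ₗ[ℝ] A := DirectSum.toModule ℝ ℤ A (fun i => (H i).subtype)

theorem gval_glof (i : ℤ) (a : H i) : gval H (glof H i a) = a :=
  DirectSum.toModule_lof (R := ℝ) (ι := ℤ) (M := fun i => H i) (N := A)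
    (φ := fun i => (H i).subtype) i a

theorem gbrk_glof (i j : ℤ) (a : H i) (b : H j) :
    gbrk H hH (glof H i a) (glof H j b) = glof H (i + j) (gcomm H hH i j a b) :=
  gbr_lof H hH i j a b

theorem glof_isInternal :
    DirectSum.IsInternal (fun i => LinearMap.range (glof H i)) :=
  isInternal_range (M := GLc H) (fun i => H i)
    (fun i => glof H i) (fun i => gcomp H i)
    (fun i x => DirectSum.component.lof_self (M := fun i => H i) ℝ i x)
    (fun i j x h => (DirectSum.component.of (M := fun i => H i) ℝ i j x).trans (dif_neg h))
    (fun P h0 h1 h2 x => DirectSum.induction_on x h0 h1 h2)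

/-- the graded commutator DGLA with zero differential -/
def glDGLA : DGLA where
  carrier := GLc H
  grade := fun i => LinearMap.range (glof H i)
  isInternal := glof_isInternal H
  bracket := gbrk H hH
  d := 0
  bracket_grade := by
    rintro i j _ ⟨a, rfl⟩ _ ⟨b, rfl⟩
    exact ⟨_, (gbrk_glof H hH i j a b).symm⟩
  d_grade := fun i a _ => zero_mem _
  d_sq := fun a => rfl
  antisymm := by
    rintro i j _ ⟨a, rfl⟩ _ ⟨b, rfl⟩
    exact gbr_antisymm H hH i j a b
  jacobi := by
    rintro i j _ ⟨a, rfl⟩ _ ⟨b, rfl⟩ c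
    exact gbr_jacobi H hH i j a b c
  leibniz := by
    intros; simp

end GradedCommutator
section TheModule

variable {g : Type} [LieRing g] [LieAlgebra ℝ g] {D : DGLA} (P : DgPresentation g D)

/-- the space `D ⊕ g ⊕ ℝ` -/
abbrev MM (g : Type) (D : DGLA) : Type := D.carrier × g × ℝ

/-- grading on `D ⊕ g ⊕ ℝ` -/
def Mgr (g : Type) [LieRing g] [LieAlgebra ℝ g] (D : DGLA) (n : ℤ) : Submodule ℝ (MM g D) :=
  (D.grade (n - 1)).prod ((if n = -1 then ⊤ else ⊥ : Submodule ℝ g).prod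
    (if n = 0 then ⊤ else ⊥ : Submodule ℝ ℝ))

/-- homogeneous endomorphisms -/
def Hgr (g : Type) [LieRing g] [LieAlgebra ℝ g] (D : DGLA) (n : ℤ) :
    Submodule ℝ (Module.End ℝ (MM g D)) where
  carrier := {f | ∀ i, ∀ m ∈ Mgr g D i, f m ∈ Mgr g D (n + i)}
  add_mem' := fun ha hb i m hm => add_mem (ha i m hm) (hb i m hm)
  zero_mem' := fun i m _ => zero_mem _
  smul_mem' := fun c f hf i m hm => Submodule.smul_mem _ c (hf i m hm)

theorem Hgr_mul (i j : ℤ) (a : Module.End ℝ (MM g D)) (ha : a ∈ Hgr g D i)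
    (b : Module.End ℝ (MM g D)) (hb : b ∈ Hgr g D j) : a * b ∈ Hgr g D (i + j) := by
  intro k m hm
  rw [add_assoc]
  exact ha _ _ (hb k m hm)

/-- action of `l x` -/
def actL : g →ₗ[ℝ] Module.End ℝ (MM g D) where
  toFun x :=
    { toFun := fun m => (D.bracket (P.l x) m.1, ⁅x, m.2.1⁆, 0)
      map_add' := by intro m m'; simp
      map_smul' := by intro c m; simp }
  map_add' := by intro x y; ext <;> simp
  map_smul' := by intro c x; ext <;> simp

theorem actL_mem (x : g) : actL P x ∈ Hgr g D 0 := by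
  rintro i ⟨b, y, r⟩ ⟨h1, h2, h3⟩
  rw [zero_add]
  refine ⟨?_, ?_, ?_⟩
  · have := D.bracket_grade 0 (i - 1) _ (P.l_grade x) b h1
    rwa [zero_add] at this
  · simp only [actL, LinearMap.coe_mk, AddHom.coe_mk]
    split_ifs at h2 ⊢ with h
    · trivial
    · have : y = 0 := by simpa using h2
      simp [this]
  · exact zero_mem _

/-- `v ↦ J (k+1) (x, v)` -/
def consJ (k : ℕ) (v : Fin (k + 1) → g) : g →ₗ[ℝ] D.carrier where
  toFun x := P.J (k + 1) (Fin.cons x v)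
  map_add' := by
    intro x y
    exact (P.J (k + 1)).cons_add v x y
  map_smul' := by
    intro c x
    exact (P.J (k + 1)).cons_smul v c x

/-- action of `J k v` -/
def actJ0 (k : ℕ) (v : Fin (k + 1) → g) : Module.End ℝ (MM g D) where
  toFun m := (D.bracket (P.J k v) m.1 + ((k : ℝ) + 2) • P.J (k + 1) (Fin.cons m.2.1 v),
    if k = 0 then m.2.2 • v 0 else 0, 0)
  map_add' := by
    intro m m'
    have := (consJ P k v).map_add m.2.1 m'.2.1
    simp only [consJ, LinearMap.coe_mk, AddHom.coe_mk] at this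
    simp only [Prod.snd_add, Prod.fst_add, this, map_add, smul_add, add_smul, Prod.mk_add_mk,
      add_zero]
    refine Prod.ext ?_ (Prod.ext ?_ rfl)
    · dsimp only
      abel
    · dsimp only
      split_ifs <;> simp
  map_smul' := by
    intro c m
    have := (consJ P k v).map_smul c m.2.1
    simp only [consJ, LinearMap.coe_mk, AddHom.coe_mk] at this
    simp only [Prod.smul_snd, Prod.smul_fst, this, map_smul, RingHom.id_apply, Prod.smul_mk]
    refine Prod.ext ?_ (Prod.ext ?_ ?_)
    · dsimp only
      rw [smul_add, smul_comm c]
    · dsimp only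
      split_ifs <;> simp [smul_smul]
    · simp

theorem actJ0_apply (k : ℕ) (v : Fin (k + 1) → g) (m : MM g D) :
    actJ0 P k v m = (D.bracket (P.J k v) m.1 + ((k : ℝ) + 2) • P.J (k + 1) (Fin.cons m.2.1 v),
    if k = 0 then m.2.2 • v 0 else 0, 0) := rfl

theorem actL_apply (x : g) (m : MM g D) :
    actL P x m = (D.bracket (P.l x) m.1, ⁅x, m.2.1⁆, 0) := rfl

theorem actJ0_mem (k : ℕ) (v : Fin (k + 1) → g) :
    actJ0 P k v ∈ Hgr g D (1 - 2 * ((k : ℤ) + 1)) := by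
  rintro i ⟨b, y, r⟩ ⟨h1, h2, h3⟩
  dsimp only at h1 h2 h3
  refine ⟨?_, ?_, ?_⟩
  · rw [actJ0_apply]
    refine add_mem ?_ (Submodule.smul_mem _ _ ?_)
    · have := D.bracket_grade _ (i - 1) _ (P.J_grade k v) b h1
      rwa [← add_sub_assoc] at this
    · dsimp only
      split_ifs at h2 with h
      · have := P.J_grade (k + 1) (Fin.cons y v)
        convert this using 1
        rw [h]; push_cast; congr 1
      · have : y = 0 := by simpa using h2
        rw [this, (P.J (k + 1)).map_coord_zero 0 (by simp)]
        exact zero_mem _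
  · rw [actJ0_apply]
    dsimp only
    by_cases hk : k = 0
    · subst hk
      by_cases hi : i = 0
      · subst hi; simp
      · have : r = 0 := by simpa [hi] using h3
        simp [this]
    · simp [hk]
  · exact zero_mem _

/-- action of `J k v` as a multilinear map into homogeneous endomorphisms -/
def actJ (k : ℕ) : MultilinearMap ℝ (fun _ : Fin (k + 1) => g)
    (Hgr g D (1 - 2 * ((k : ℤ) + 1))) where
  toFun v := ⟨actJ0 P k v, actJ0_mem P k v⟩
  map_update_add' := by
    intro inst v i x y
    obtain rfl : inst = instDecidableEqFin (k + 1) := Subsingleton.elim _ _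
    refine Subtype.ext (LinearMap.ext fun m => ?_)
    simp only [Submodule.coe_add, LinearMap.add_apply, actJ0_apply, Fin.cons_update,
      MultilinearMap.map_update_add, map_add, Prod.mk_add_mk, smul_add, add_zero]
    refine Prod.ext ?_ (Prod.ext ?_ rfl)
    · dsimp only
      abel
    · dsimp only
      split_ifs with h
      · subst h
        obtain rfl : i = 0 := Fin.fin_one_eq_zero i
        simp
      · simp
  map_update_smul' := by
    intro inst v i c x
    obtain rfl : inst = instDecidableEqFin (k + 1) := Subsingleton.elim _ _
    refine Subtype.ext (LinearMap.ext fun m => ?_)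
    simp only [SetLike.val_smul, LinearMap.smul_apply, actJ0_apply, Fin.cons_update,
      MultilinearMap.map_update_smul, map_smul, Prod.smul_mk, smul_zero, smul_add]
    refine Prod.ext ?_ (Prod.ext ?_ rfl)
    · dsimp only
      rw [smul_comm c]
    · dsimp only
      split_ifs with h
      · subst h
        obtain rfl : i = 0 := Fin.fin_one_eq_zero i
        simp [smul_comm c]
      · simp

theorem actJ0_symm (k : ℕ) (v : Fin (k + 1) → g) (σ : Equiv.Perm (Fin (k + 1))) :
    actJ0 P k (v ∘ σ) = actJ0 P k v := by
  refine LinearMap.ext fun m => ?_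
  rw [actJ0_apply, actJ0_apply, P.J_symm]
  have h1 : (Fin.cons m.2.1 (v ∘ σ) : Fin (k + 2) → g) =
      (Fin.cons m.2.1 v : Fin (k + 2) → g) ∘ (Equiv.Perm.decomposeFin.symm (0, σ)) := by
    ext i
    refine Fin.cases ?_ (fun j => ?_) i
    · simp
    · simp [Equiv.Perm.decomposeFin_symm_apply_succ]
  rw [h1, P.J_symm]
  refine Prod.ext rfl (Prod.ext ?_ rfl)
  dsimp only
  split_ifs with h
  · subst h
    have h0 : σ 0 = 0 := Fin.fin_one_eq_zero _
    simp [h0]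
  · rfl

theorem comm_LL (x y : g) :
    actL P x * actL P y - actL P y * actL P x = actL P ⁅x, y⁆ := by
  refine LinearMap.ext fun m => ?_
  simp only [LinearMap.sub_apply, Module.End.mul_apply, actL_apply]
  refine Prod.ext ?_ (Prod.ext ?_ ?_)
  · have := D.jacobi 0 0 _ (P.l_grade x) _ (P.l_grade y) m.1
    simp only [Prod.fst_sub]
    rw [this, P.bracket_ll]
    simp
  · simp
  · simp

theorem comm_LJ (k : ℕ) (x : g) (v : Fin (k + 1) → g) :
    actL P x * actJ0 P k v - actJ0 P k v * actL P x =
      ∑ j : Fin (k + 1), actJ0 P k (Function.update v j ⁅x, v j⁆) := by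
  refine LinearMap.ext fun m => ?_
  simp only [LinearMap.sub_apply, Module.End.mul_apply, actL_apply, actJ0_apply,
    LinearMap.sum_apply]
  refine Prod.ext ?_ (Prod.ext ?_ ?_)
  · have h1 := D.jacobi 0 _ _ (P.l_grade x) _ (P.J_grade k v) m.1
    have h2 := P.bracket_lJ (k + 1) x (Fin.cons m.2.1 v)
    rw [Fin.sum_univ_succ] at h2
    simp only [Fin.cons_zero, Fin.cons_succ, ← Fin.cons_update, Fin.update_cons_zero] at h2
    simp only [Prod.fst_sub, Prod.fst_sum, Finset.sum_add_distrib, map_add, map_smul, h2, h1,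
      P.bracket_lJ, map_sum, LinearMap.sum_apply, ← Finset.smul_sum, smul_add]
    simp only [zero_mul, zpow_zero, one_smul]
    abel
  · simp only [Prod.fst_sub, Prod.snd_sub, Prod.fst_sum, Prod.snd_sum]
    split_ifs with h
    · subst h
      simp
    · simp
  · simp [Prod.snd_sum]

/-- `D` acts on `D ⊕ g ⊕ ℝ`. -/
theorem exists_rep : ∃ R : D.carrier →ₗ[ℝ] Module.End ℝ (MM g D),
    (∀ x, R (P.l x) = actL P x) ∧ (∀ k v, R (P.J k v) = actJ0 P k v) ∧
    (∀ i j, ∀ a ∈ D.grade i, ∀ b ∈ D.grade j,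
      R (D.bracket a b) = R a * R b - ((-1 : ℝ) ^ (i * j)) • (R b * R a)) ∧
    (∀ i, ∀ a ∈ D.grade i, R a ∈ Hgr g D i) := by
  have hf := P.free (glDGLA (Hgr g D) Hgr_mul)
    (glof (Hgr g D) 0 ∘ₗ (actL P).codRestrict _ (actL_mem P))
    (fun k => (glof (Hgr g D) _).compMultilinearMap (actJ P k))
    (by
      intro k v σ
      refine congrArg (glof (Hgr g D) _) (Subtype.ext ?_)
      exact actJ0_symm P k v σ)
    (fun x => ⟨_, rfl⟩) (fun k v => ⟨_, rfl⟩)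
    (by
      intro x y
      refine (gbrk_glof (Hgr g D) Hgr_mul 0 0 _ _).trans ?_
      refine lof_congr (Hgr g D) (add_zero 0) _ _ ?_
      refine Eq.trans ?_ (comm_LL P x y)
      simp [gcomm])
    (by
      intro k x v
      refine (gbrk_glof (Hgr g D) Hgr_mul 0 _ _ _).trans ?_
      refine Eq.trans (lof_congr (Hgr g D) (zero_add _) _
        (∑ j : Fin (k + 1), actJ P k (Function.update v j ⁅x, v j⁆)) ?_) ?_
      · rw [AddSubmonoidClass.coe_finset_sum]
        refine Eq.trans ?_ (comm_LJ P k x v)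
        simp [gcomm, actJ]
      · exact map_sum (glof (Hgr g D) _) _ _)
  obtain ⟨φ0, ⟨h10, h20, h30, h40⟩, -⟩ := hf
  obtain ⟨φ, h1, key, h3, h4⟩ : ∃ φ : D.carrier →ₗ[ℝ] GLc (Hgr g D),
      (∀ a b, φ (D.bracket a b) = gbrk (Hgr g D) Hgr_mul (φ a) (φ b)) ∧
      (∀ i, ∀ a ∈ D.grade i, ∃ f : Hgr g D i, glof (Hgr g D) i f = φ a) ∧
      (∀ x, φ (P.l x) = glof (Hgr g D) 0 ⟨actL P x, actL_mem P x⟩) ∧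
      (∀ k v, φ (P.J k v) = glof (Hgr g D) _ (actJ P k v)) :=
    ⟨φ0, h10, h20, h30, h40⟩
  refine ⟨gval (Hgr g D) ∘ₗ φ, ?_, ?_, ?_, ?_⟩
  · intro x
    rw [LinearMap.comp_apply, h3]
    exact gval_glof _ _ _
  · intro k v
    rw [LinearMap.comp_apply, h4]
    exact gval_glof _ _ _
  · intro i j a ha b hb
    obtain ⟨f, hf⟩ := key i a ha
    obtain ⟨f', hf'⟩ := key j b hb
    simp only [LinearMap.comp_apply, h1, ← hf, ← hf', gbrk_glof, gval_glof]
    rfl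
  · intro i a ha
    obtain ⟨f, hf⟩ := key i a ha
    rw [LinearMap.comp_apply, ← hf, gval_glof]
    exact f.2

end TheModule
section Generation

variable {g : Type} [LieRing g] [LieAlgebra ℝ g] {D : DGLA} (P : DgPresentation g D)

/-- the generator `J k (y, …, y)` -/
def jj (k : ℕ) (y : g) : D.carrier := P.J k (fun _ => y)

/-- the derivative of `jj k` at `y` in direction `x` -/
def DJ (k : ℕ) (x y : g) : D.carrier := ∑ i, P.J k (Function.update (fun _ => y) i x)

theorem jj_grade (k : ℕ) (y : g) : jj P k y ∈ D.grade (1 - 2 * ((k : ℤ) + 1)) := P.J_grade _ _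

theorem DJ_grade (k : ℕ) (x y : g) : DJ P k x y ∈ D.grade (1 - 2 * ((k : ℤ) + 1)) :=
  Submodule.sum_mem _ fun _ _ => P.J_grade _ _

theorem DJ_zero (x y : g) : DJ P 0 x y = jj P 0 x := by
  unfold DJ jj
  rw [Fin.sum_univ_one]
  congr 1
  ext i
  obtain rfl : i = 0 := Fin.fin_one_eq_zero i
  simp

theorem DJ_succ (k : ℕ) (x y : g) :
    DJ P (k + 1) x y = ((k : ℝ) + 2) • P.J (k + 1) (Fin.cons x (fun _ => y)) := by
  unfold DJ
  have h : ∀ i : Fin (k + 1 + 1), P.J (k + 1) (Function.update (fun _ => y) i x) =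
      P.J (k + 1) (Fin.cons x (fun _ => y)) := by
    intro i
    rw [← P.J_symm (k + 1) (Fin.cons x (fun _ => y)) (Equiv.swap 0 i)]
    congr 1
    ext j
    rw [Function.comp_apply]
    by_cases hj : j = i
    · subst hj
      simp
    · rw [Function.update_of_ne hj]
      by_cases hj0 : j = 0
      · subst hj0
        rw [Equiv.swap_apply_left]
        obtain ⟨m, rfl⟩ := Fin.exists_succ_eq.2 (Ne.symm hj)
        simp
      · rw [Equiv.swap_apply_of_ne_of_ne hj0 hj]
        obtain ⟨m, rfl⟩ := Fin.exists_succ_eq.2 hj0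
        simp
  rw [Finset.sum_congr rfl fun i _ => h i, Finset.sum_const, Finset.card_univ, Fintype.card_fin,
    ← Nat.cast_smul_eq_nsmul ℝ]
  congr 1
  push_cast
  ring

theorem DJ_self (k : ℕ) (y : g) : DJ P k y y = ((k : ℝ) + 1) • jj P k y := by
  unfold DJ jj
  have h : ∀ i : Fin (k + 1), P.J k (Function.update (fun _ => y) i y) = P.J k (fun _ => y) := by
    intro i
    congr 1
    exact Function.update_eq_self i (fun _ => y)
  rw [Finset.sum_congr rfl fun i _ => h i, Finset.sum_const, Finset.card_univ, Fintype.card_fin,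
    ← Nat.cast_smul_eq_nsmul ℝ]
  congr 1
  push_cast
  ring

theorem hasLin_jj (k : ℕ) (x y : g) :
    HasLin (fun t => jj P k (y + t • x)) (jj P k y) (DJ P k x y) :=
  hasLin_multilinear (P.J k) (fun _ => y) (fun _ => x)

theorem odd_sign (k : ℕ) (j : ℤ) : (-1 : ℝ) ^ ((1 - 2 * ((k : ℤ) + 1)) * j) = (-1 : ℝ) ^ j := by
  have : (1 - 2 * ((k : ℤ) + 1)) * j = j + 2 * (-((k : ℤ) + 1) * j) := by ring
  rw [this, zpow_add₀ (by norm_num), zpow_mul]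
  norm_num

theorem odd_sign_one (k : ℕ) : (-1 : ℝ) ^ (1 - 2 * ((k : ℤ) + 1)) = -1 := by
  have := odd_sign k 1
  rwa [mul_one, zpow_one] at this

theorem odd_symm (k m : ℕ) {a b : D.carrier} (ha : a ∈ D.grade (1 - 2 * ((k : ℤ) + 1)))
    (hb : b ∈ D.grade (1 - 2 * ((m : ℤ) + 1))) : D.bracket a b = D.bracket b a := by
  rw [D.antisymm _ _ a ha b hb, odd_sign, odd_sign_one]
  simp

theorem d_jj_zero (y : g) : D.d (jj P 0 y) = P.l y := P.d_J_one y

theorem d_jj_succ (k : ℕ) (y : g) : D.d (jj P (k + 1) y) =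
    (1 / 2 : ℝ) • ∑ s ∈ Finset.range (k + 1), D.bracket (jj P s y) (jj P (k - s) y) := P.d_J k y

theorem sum_reflect {V : Type*} [AddCommMonoid V] (k : ℕ) (f : ℕ → ℕ → V) :
    ∑ s ∈ Finset.range (k + 1), f (k - s) s = ∑ s ∈ Finset.range (k + 1), f s (k - s) := by
  rw [← Finset.sum_range_reflect (fun s => f s (k - s)) (k + 1)]
  refine Finset.sum_congr rfl fun s hs => ?_
  rw [Finset.mem_range] at hs
  congr 1
  omega

theorem d_DJ_succ (k : ℕ) (x y : g) : D.d (DJ P (k + 1) x y) =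
    ∑ s ∈ Finset.range (k + 1), D.bracket (jj P s y) (DJ P (k - s) x y) := by
  have h1 := (hasLin_jj P (k + 1) x y).map D.d
  have h2 := (HasLin.sum (Finset.range (k + 1)) fun s _ =>
    HasLin.bilin D.bracket (hasLin_jj P s x y) (hasLin_jj P (k - s) x y)).map
      ((1 / 2 : ℝ) • LinearMap.id)
  have h3 := h1.unique h2 (fun t => d_jj_succ P k (y + t • x))
  rw [h3, Finset.sum_add_distrib]
  have h4 : ∑ s ∈ Finset.range (k + 1), D.bracket (DJ P s x y) (jj P (k - s) y) =
      ∑ s ∈ Finset.range (k + 1), D.bracket (jj P s y) (DJ P (k - s) x y) := by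
    rw [← sum_reflect k (fun s t => D.bracket (jj P s y) (DJ P t x y))]
    refine Finset.sum_congr rfl fun s _ => ?_
    exact odd_symm s (k - s) (DJ_grade P s x y) (jj_grade P _ y)
  rw [h4, LinearMap.smul_apply, LinearMap.id_apply, ← two_smul ℝ, smul_smul]
  norm_num

/-- iterated brackets of the generators `jj` with weight and degree -/
inductive Mono : ℕ → ℤ → D.carrier → Prop
  | base (k : ℕ) (y : g) : Mono (k + 1) (1 - 2 * ((k : ℤ) + 1)) (jj P k y)
  | step (k : ℕ) (y : g) (n : ℕ) (j : ℤ) (b : D.carrier) (hb : Mono n j b) :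
      Mono (k + 1 + n) ((1 - 2 * ((k : ℤ) + 1)) + j) (D.bracket (jj P k y) b)

variable {P}

theorem Mono.grade {n : ℕ} {j : ℤ} {b : D.carrier} (h : Mono P n j b) : b ∈ D.grade j := by
  induction h with
  | base k y => exact jj_grade P k y
  | step k y n j b hb ih => exact D.bracket_grade _ _ _ (jj_grade P k y) _ ih

theorem Mono.pos {n : ℕ} {j : ℤ} {b : D.carrier} (h : Mono P n j b) : 1 ≤ n := by
  cases h <;> omega

variable (P)

/-- the weight filtration -/
def FF (n : ℕ) : Submodule ℝ D.carrier :=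
  Submodule.span ℝ {b | ∃ m j, m ≤ n ∧ Mono P m j b}

theorem FF_mono {n m : ℕ} (h : n ≤ m) : FF P n ≤ FF P m := by
  refine Submodule.span_mono ?_
  rintro b ⟨p, j, hp, hb⟩
  exact ⟨p, j, hp.trans h, hb⟩

variable {P}

theorem Mono.mem {n : ℕ} {j : ℤ} {b : D.carrier} (h : Mono P n j b) : b ∈ FF P n :=
  Submodule.subset_span ⟨n, j, le_rfl, h⟩

variable (P)

theorem FF_ind {n : ℕ} (Q : Submodule ℝ D.carrier)
    (h : ∀ m j b, m ≤ n → Mono P m j b → b ∈ Q) : FF P n ≤ Q := by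
  refine Submodule.span_le.2 ?_
  rintro b ⟨m, j, hm, hb⟩
  exact h m j b hm hb

theorem J_mem (k : ℕ) (v : Fin (k + 1) → g) : P.J k v ∈ FF P (k + 1) :=
  polarization_mem (P.J k) (P.J_symm k) (FF P (k + 1)) (fun y => (Mono.base k y).mem) v

theorem DJ_mem (k : ℕ) (x y : g) : DJ P k x y ∈ FF P (k + 1) :=
  Submodule.sum_mem _ fun _ _ => J_mem P _ _

theorem jj_br_mem (k : ℕ) (y : g) (n : ℕ) {b : D.carrier} (hb : b ∈ FF P n) :
    D.bracket (jj P k y) b ∈ FF P (k + 1 + n) := by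
  refine FF_ind P ((FF P (k + 1 + n)).comap (D.bracket (jj P k y))) ?_ hb
  intro m j b hm hb
  exact FF_mono P (by omega) (Mono.step k y m j b hb).mem

theorem Mono_br_mem {n : ℕ} {i : ℤ} {a : D.carrier} (ha : Mono P n i a) :
    ∀ {m : ℕ} {j : ℤ} {b : D.carrier}, Mono P m j b → D.bracket a b ∈ FF P (n + m) := by
  induction ha with
  | base k y => intro m j b hb; exact (Mono.step k y m j b hb).mem
  | step k y n i a ha ih =>
    intro m j b hb
    have h := D.jacobi _ _ _ (jj_grade P k y) _ ha.grade b
    rw [← sub_eq_iff_eq_add] at h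
    rw [← h]
    refine sub_mem ?_ (Submodule.smul_mem _ _ ?_)
    · have := jj_br_mem P k y _ (ih hb)
      exact FF_mono P (by omega) this
    · have := ih (Mono.step k y m j b hb)
      exact FF_mono P (by omega) this

theorem FF_br_mem {n m : ℕ} {a b : D.carrier} (ha : a ∈ FF P n) (hb : b ∈ FF P m) :
    D.bracket a b ∈ FF P (n + m) := by
  refine FF_ind P ((FF P (n + m)).comap (D.bracket.flip b)) ?_ ha
  intro n' i a hn ha
  refine FF_ind P ((FF P (n + m)).comap (D.bracket a)) ?_ hb
  intro m' j b hm hb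
  exact FF_mono P (by omega) (Mono_br_mem P ha hb)

theorem l_br_Mono (x : g) {n : ℕ} {j : ℤ} {b : D.carrier} (hb : Mono P n j b) :
    D.bracket (P.l x) b ∈ FF P n := by
  have h0 : ∀ k y, D.bracket (P.l x) (jj P k y) ∈ FF P (k + 1) := by
    intro k y
    unfold jj
    rw [P.bracket_lJ]
    exact Submodule.sum_mem _ fun _ _ => J_mem P _ _
  induction hb with
  | base k y => exact h0 k y
  | step k y n j b hb ih =>
    rw [D.jacobi 0 _ _ (P.l_grade x) _ (jj_grade P k y) b]
    refine add_mem (FF_br_mem P (h0 k y) hb.mem) (Submodule.smul_mem _ _ ?_)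
    exact jj_br_mem P k y _ ih

/-- span of all weights -/
def FA : Submodule ℝ D.carrier := Submodule.span ℝ {b | ∃ m j, Mono P m j b}

theorem FF_le_FA (n : ℕ) : FF P n ≤ FA P := by
  refine Submodule.span_mono ?_
  rintro b ⟨p, j, hp, hb⟩
  exact ⟨p, j, hb⟩

theorem FA_exists {a : D.carrier} (ha : a ∈ FA P) : ∃ n, a ∈ FF P n := by
  refine Submodule.span_induction ?_ ?_ ?_ ?_ ha
  · rintro b ⟨m, j, hb⟩
    exact ⟨m, hb.mem⟩
  · exact ⟨0, zero_mem _⟩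
  · rintro b c - - ⟨n, hn⟩ ⟨m, hm⟩
    exact ⟨max n m, add_mem (FF_mono P (le_max_left _ _) hn) (FF_mono P (le_max_right _ _) hm)⟩
  · rintro c b - ⟨n, hn⟩
    exact ⟨n, Submodule.smul_mem _ _ hn⟩

theorem FA_ind (Q : Submodule ℝ D.carrier)
    (h : ∀ m j b, Mono P m j b → b ∈ Q) : FA P ≤ Q := by
  refine Submodule.span_le.2 ?_
  rintro b ⟨m, j, hb⟩
  exact h m j b hb

theorem gen_top : LinearMap.range P.l ⊔ FA P = ⊤ := by
  rw [eq_top_iff, ← P.generates]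
  refine sInf_le ⟨?_, ?_⟩
  · rintro a (ha | ⟨k, v, rfl⟩)
    · exact Submodule.mem_sup_left ha
    · exact Submodule.mem_sup_right (FF_le_FA P _ (J_mem P k v))
  · have hll : ∀ x y, D.bracket (P.l x) (P.l y) ∈ LinearMap.range P.l ⊔ FA P := by
      intro x y
      rw [P.bracket_ll]
      exact Submodule.mem_sup_left ⟨_, rfl⟩
    have hlF : ∀ x, ∀ f ∈ FA P, D.bracket (P.l x) f ∈ LinearMap.range P.l ⊔ FA P := by
      intro x f hf
      refine FA_ind P ((LinearMap.range P.l ⊔ FA P).comap (D.bracket (P.l x))) ?_ hf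
      intro m j b hb
      exact Submodule.mem_sup_right (FF_le_FA P _ (l_br_Mono P x hb))
    have hFl : ∀ x, ∀ f ∈ FA P, D.bracket f (P.l x) ∈ LinearMap.range P.l ⊔ FA P := by
      intro x f hf
      refine FA_ind P ((LinearMap.range P.l ⊔ FA P).comap (D.bracket.flip (P.l x))) ?_ hf
      intro m j b hb
      change D.bracket b (P.l x) ∈ LinearMap.range P.l ⊔ FA P
      rw [D.antisymm _ _ b hb.grade _ (P.l_grade x)]
      exact Submodule.smul_mem _ _
        (Submodule.mem_sup_right (FF_le_FA P _ (l_br_Mono P x hb)))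
    intro a ha b hb
    obtain ⟨_, ⟨x, rfl⟩, f, hf, rfl⟩ := Submodule.mem_sup.1 ha
    obtain ⟨_, ⟨y, rfl⟩, f', hf', rfl⟩ := Submodule.mem_sup.1 hb
    obtain ⟨n, hn⟩ := FA_exists P hf
    obtain ⟨m, hm⟩ := FA_exists P hf'
    simp only [map_add, LinearMap.add_apply]
    exact add_mem (add_mem (hll x y) (hFl y f hf)) (add_mem (hlF x f' hf')
      (Submodule.mem_sup_right (FF_le_FA P _ (FF_br_mem P hn hm))))

end Generation
section Contraction

variable {g : Type} [LieRing g] [LieAlgebra ℝ g] {D : DGLA}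

/-- a representation on `D ⊕ g ⊕ ℝ` as constructed above -/
structure DgRep (P : DgPresentation g D) where
  R : D.carrier →ₗ[ℝ] Module.End ℝ (MM g D)
  R_l : ∀ x, R (P.l x) = actL P x
  R_J : ∀ k v, R (P.J k v) = actJ0 P k v
  R_br : ∀ i j, ∀ a ∈ D.grade i, ∀ b ∈ D.grade j,
      R (D.bracket a b) = R a * R b - ((-1 : ℝ) ^ (i * j)) • (R b * R a)
  R_gr : ∀ i, ∀ a ∈ D.grade i, R a ∈ Hgr g D i

variable {P : DgPresentation g D} (ρ : DgRep P)

theorem R_jj (k : ℕ) (y : g) (m : MM g D) : ρ.R (jj P k y) m =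
    (D.bracket (jj P k y) m.1 + DJ P (k + 1) m.2.1 y, if k = 0 then m.2.2 • y else 0, 0) := by
  unfold jj
  rw [ρ.R_J, actJ0_apply, DJ_succ]

theorem R_l_apply (x : g) (m : MM g D) :
    ρ.R (P.l x) m = (D.bracket (P.l x) m.1, ⁅x, m.2.1⁆, 0) := by
  rw [ρ.R_l, actL_apply]

theorem DJ_zero_left (k : ℕ) (y : g) : DJ P k 0 y = 0 := by
  unfold DJ
  exact Finset.sum_eq_zero fun i _ => (P.J k).map_coord_zero i (by simp)

theorem R_step (k : ℕ) (y : g) {j : ℤ} {b : D.carrier} (hb : b ∈ D.grade j) :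
    ρ.R (D.bracket (jj P k y) b) =
      ρ.R (jj P k y) * ρ.R b - ((-1 : ℝ) ^ j) • (ρ.R b * ρ.R (jj P k y)) := by
  rw [ρ.R_br _ _ _ (jj_grade P k y) b hb, odd_sign]

theorem R_Mono_D {n : ℕ} {j : ℤ} {b : D.carrier} (hb : Mono P n j b) :
    ∀ c : D.carrier, ρ.R b (c, 0, 0) = (D.bracket b c, 0, 0) := by
  have h0 : ∀ k y, ∀ c : D.carrier, ρ.R (jj P k y) (c, 0, 0) = (D.bracket (jj P k y) c, 0, 0) := by
    intro k y c
    rw [R_jj]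
    simp [DJ_zero_left]
  induction hb with
  | base k y => exact h0 k y
  | step k y n j b hb ih =>
    intro c
    rw [R_step ρ k y hb.grade]
    simp only [LinearMap.sub_apply, LinearMap.smul_apply, Module.End.mul_apply, ih, h0]
    rw [D.jacobi _ _ _ (jj_grade P k y) _ hb.grade c, odd_sign]
    simp
    rfl

theorem R_D (a c : D.carrier) : ρ.R a (c, 0, 0) = (D.bracket a c, 0, 0) := by
  let Q : Submodule ℝ D.carrier := LinearMap.eqLocus
    ((LinearMap.applyₗ ((c, 0, 0) : MM g D)) ∘ₗ ρ.R)
    (LinearMap.inl ℝ D.carrier (g × ℝ) ∘ₗ D.bracket.flip c)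
  have hQ : LinearMap.range P.l ⊔ FA P ≤ Q := by
    refine sup_le ?_ (FA_ind P Q ?_)
    · rintro _ ⟨x, rfl⟩
      change ρ.R (P.l x) (c, 0, 0) = (D.bracket (P.l x) c, 0, 0)
      rw [R_l_apply]
      simp
    · intro m j b hb
      exact R_Mono_D ρ hb c
  rw [gen_top] at hQ
  exact hQ (Submodule.mem_top : a ∈ ⊤)

theorem R_third {n : ℕ} {j : ℤ} {b : D.carrier} (hb : Mono P n j b) :
    ∀ m, (ρ.R b m).2.2 = 0 := by
  have h0 : ∀ k y, ∀ m, (ρ.R (jj P k y) m).2.2 = 0 := by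
    intro k y c
    rw [R_jj]
  induction hb with
  | base k y => exact h0 k y
  | step k y n j b hb ih =>
    intro c
    rw [R_step ρ k y hb.grade]
    simp [ih, h0]

/-- the differential on `D ⊕ g ⊕ ℝ` -/
def del (P : DgPresentation g D) : Module.End ℝ (MM g D) where
  toFun m := (D.d m.1 - P.J 0 (fun _ => m.2.1), 0, 0)
  map_add' := by
    intro m m'
    have h : P.J 0 (fun _ => m.2.1 + m'.2.1) = P.J 0 (fun _ => m.2.1) + P.J 0 (fun _ => m'.2.1) := by
      have := DJ_zero P (m.2.1 + m'.2.1) 0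
      have h1 := DJ_zero P m.2.1 0
      have h2 := DJ_zero P m'.2.1 0
      unfold DJ jj at this h1 h2
      rw [← this, ← h1, ← h2]
      simp
    refine Prod.ext ?_ (Prod.ext ?_ ?_)
    · simp [h]
      abel
    · simp
    · simp
  map_smul' := by
    intro c m
    have h : P.J 0 (fun _ => c • m.2.1) = c • P.J 0 (fun _ => m.2.1) := by
      have := DJ_zero P (c • m.2.1) 0
      have h1 := DJ_zero P m.2.1 0
      unfold DJ jj at this h1
      rw [← this, ← h1]
      simp
    refine Prod.ext ?_ (Prod.ext ?_ ?_)
    · simp [h, smul_sub]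
    · simp
    · simp

theorem del_apply (m : MM g D) : del P m = (D.d m.1 - jj P 0 m.2.1, 0, 0) := rfl

theorem jj_zero_right (k : ℕ) : jj P k 0 = 0 := (P.J k).map_coord_zero 0 rfl

/-- failure of compatibility of the differentials -/
def Del (s : ℝ) (b : D.carrier) : Module.End ℝ (MM g D) :=
  del P * ρ.R b - s • (ρ.R b * del P) - ρ.R (D.d b)

theorem Del_D {j : ℤ} {b : D.carrier} (hb : b ∈ D.grade j) (c : D.carrier) :
    Del ρ ((-1 : ℝ) ^ j) b (c, 0, 0) = 0 := by
  simp only [Del, LinearMap.sub_apply, LinearMap.smul_apply, Module.End.mul_apply, R_D, del_apply,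
    jj_zero_right, sub_zero, D.leibniz j b hb c]
  simp

theorem ring_identity {A : Type*} [Ring A] [Algebra ℝ A] (p w b dw db : A) (s : ℝ)
    (hs : s * s = 1) :
    p * (w * b - s • (b * w)) - (-s) • ((w * b - s • (b * w)) * p)
      - ((dw * b - b * dw) - (w * db + s • (db * w))) =
    (p * w - (-1 : ℝ) • (w * p) - dw) * b - b * (p * w - (-1 : ℝ) • (w * p) - dw)
      - w * (p * b - s • (b * p) - db) - s • ((p * b - s • (b * p) - db) * w) := by
  rcases mul_self_eq_one_iff.1 hs with h | h
  · rw [h]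
    simp only [one_smul, neg_smul]
    noncomm_ring
  · rw [h]
    simp only [one_smul, neg_smul, neg_neg]
    noncomm_ring

theorem Del_step (k : ℕ) (y : g) {j : ℤ} {b : D.carrier} (hb : b ∈ D.grade j) :
    Del ρ (-(-1 : ℝ) ^ j) (D.bracket (jj P k y) b) =
      Del ρ (-1) (jj P k y) * ρ.R b - ρ.R b * Del ρ (-1) (jj P k y)
      - ρ.R (jj P k y) * Del ρ ((-1 : ℝ) ^ j) b
      - ((-1 : ℝ) ^ j) • (Del ρ ((-1 : ℝ) ^ j) b * ρ.R (jj P k y)) := by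
  have hw := jj_grade P k y
  have e1 : ρ.R (D.d (D.bracket (jj P k y) b)) =
      (ρ.R (D.d (jj P k y)) * ρ.R b - ρ.R b * ρ.R (D.d (jj P k y)))
      - (ρ.R (jj P k y) * ρ.R (D.d b)
        + ((-1 : ℝ) ^ j) • (ρ.R (D.d b) * ρ.R (jj P k y))) := by
    rw [D.leibniz _ _ hw b, odd_sign_one, map_add, map_smul,
      ρ.R_br _ _ _ (D.d_grade _ _ hw) b hb, ρ.R_br _ _ _ hw _ (D.d_grade _ _ hb), odd_sign,
      neg_one_zpow_add]
    have : (-1 : ℝ) ^ ((1 - 2 * ((k : ℤ) + 1) + 1) * j) = 1 := by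
      have h2 : (1 - 2 * ((k : ℤ) + 1) + 1) * j = 2 * (-(k : ℤ) * j) := by ring
      rw [h2, zpow_mul]
      norm_num
    rw [this, zpow_one]
    module
  unfold Del
  rw [e1, R_step ρ k y hb]
  exact ring_identity _ _ _ _ _ _ (neg_one_zpow_sq j)

end Contraction
section Estimates

variable {g : Type} [LieRing g] [LieAlgebra ℝ g] {D : DGLA}
variable {P : DgPresentation g D} (ρ : DgRep P)

theorem R_d_succ (k : ℕ) (y : g) : ρ.R (D.d (jj P (k + 1) y)) =
    ∑ s ∈ Finset.range (k + 1), ρ.R (jj P s y) * ρ.R (jj P (k - s) y) := by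
  rw [d_jj_succ, map_smul, map_sum]
  have h : ∀ s ∈ Finset.range (k + 1), ρ.R (D.bracket (jj P s y) (jj P (k - s) y)) =
      ρ.R (jj P s y) * ρ.R (jj P (k - s) y) + ρ.R (jj P (k - s) y) * ρ.R (jj P s y) := by
    intro s _
    rw [R_step ρ s y (jj_grade P (k - s) y), odd_sign_one]
    module
  rw [Finset.sum_congr rfl h, Finset.sum_add_distrib,
    sum_reflect k (fun s t => ρ.R (jj P s y) * ρ.R (jj P t y)), ← two_smul ℝ, smul_smul]
  norm_num

theorem R_jj_g (k : ℕ) (x y : g) : ρ.R (jj P k y) (0, x, 0) = (DJ P (k + 1) x y, 0, 0) := by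
  rw [R_jj]
  simp

theorem R_jj_one (k : ℕ) (y : g) :
    ρ.R (jj P k y) (0, 0, 1) = (0, if k = 0 then y else 0, 0) := by
  rw [R_jj]
  simp [DJ_zero_left]

theorem del_g (x : g) : del P (0, x, 0) = -(jj P 0 x, 0, 0) := by
  rw [del_apply]
  simp

theorem del_one : del P (0, 0, 1) = 0 := by
  rw [del_apply]
  simp [jj_zero_right]

theorem Del_jj_g_zero (x y : g) : Del ρ (-1) (jj P 0 y) (0, x, 0) = (0, -⁅y, x⁆, 0) := by
  simp only [Del, LinearMap.sub_apply, LinearMap.smul_apply, Module.End.mul_apply, R_jj_g, del_g,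
    map_neg, R_D, d_jj_zero, R_l_apply, del_apply, jj_zero_right]
  rw [d_DJ_succ]
  simp [DJ_zero]

theorem Del_jj_g_succ (k : ℕ) (x y : g) : Del ρ (-1) (jj P (k + 1) y) (0, x, 0) = 0 := by
  simp only [Del, LinearMap.sub_apply, LinearMap.smul_apply, Module.End.mul_apply, R_jj_g, del_g,
    map_neg, R_D, R_d_succ, LinearMap.sum_apply, del_apply, jj_zero_right]
  rw [d_DJ_succ, Finset.sum_range_succ]
  have h : ∀ s ∈ Finset.range (k + 1), ((D.bracket (jj P s y) (DJ P (k - s + 1) x y), 0, 0) : MM g D)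
      = LinearMap.inl ℝ D.carrier (g × ℝ) (D.bracket (jj P s y) (DJ P (k + 1 - s) x y)) := by
    intro s hs
    rw [Finset.mem_range] at hs
    have : k - s + 1 = k + 1 - s := by omega
    rw [this]
    rfl
  rw [Finset.sum_congr rfl h, ← map_sum]
  refine Prod.ext ?_ (Prod.ext ?_ ?_) <;> simp [DJ_zero, Prod.fst_sum, Prod.snd_sum]

theorem Del_jj_one (k : ℕ) (y : g) :
    Del ρ (-1) (jj P k y) (0, 0, 1) = (-((k : ℝ) + 1)) • (jj P k y, 0, 0) := by
  simp only [Del, LinearMap.sub_apply, LinearMap.smul_apply, Module.End.mul_apply, R_jj_one,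
    del_one, map_zero, smul_zero, sub_zero]
  cases k with
  | zero =>
    refine Prod.ext ?_ (Prod.ext ?_ ?_) <;> simp [d_jj_zero, R_l_apply, del_apply]
  | succ k =>
    rw [R_d_succ, Finset.sum_range_succ, LinearMap.add_apply, LinearMap.sum_apply]
    rw [Finset.sum_eq_zero]
    · simp only [Module.End.mul_apply, R_jj_one, Nat.sub_self, R_jj_g, if_true, DJ_self]
      refine Prod.ext ?_ (Prod.ext ?_ ?_)
      · simp [del_apply, jj_zero_right]
        module
      · simp [del_apply]
      · simp [del_apply]
    · intro s hs
      rw [Finset.mem_range] at hs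
      rw [Module.End.mul_apply, R_jj_one, if_neg (by omega)]
      exact map_zero _

/-- `F n ⊕ g` -/
def GG (P : DgPresentation g D) (n : ℕ) : Submodule ℝ (MM g D) :=
  (FF P n).prod (Submodule.prod ⊤ ⊥)

theorem mem_GG {n : ℕ} {m : MM g D} : m ∈ GG P n ↔ m.1 ∈ FF P n ∧ m.2.2 = 0 := by
  simp [GG, Submodule.mem_prod]

theorem GG_mono {n m : ℕ} (h : n ≤ m) : GG P n ≤ GG P m := by
  intro a ha
  rw [mem_GG] at ha ⊢
  exact ⟨FF_mono P h ha.1, ha.2⟩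

/-- `F n ⊂ D ⊕ g ⊕ ℝ` -/
def EE (P : DgPresentation g D) (n : ℕ) : Submodule ℝ (MM g D) :=
  (FF P n).map (LinearMap.inl ℝ D.carrier (g × ℝ))

theorem mem_EE {n : ℕ} {m : MM g D} : m ∈ EE P n ↔ ∃ c ∈ FF P n, m = (c, 0, 0) := by
  constructor
  · rintro ⟨c, hc, rfl⟩
    exact ⟨c, hc, rfl⟩
  · rintro ⟨c, hc, rfl⟩
    exact ⟨c, hc, rfl⟩

theorem EE_mono {n m : ℕ} (h : n ≤ m) : EE P n ≤ EE P m := Submodule.map_mono (FF_mono P h)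

theorem EE_le_GG (n : ℕ) : EE P n ≤ GG P n := by
  rintro m hm
  obtain ⟨c, hc, rfl⟩ := mem_EE.1 hm
  exact mem_GG.2 ⟨hc, rfl⟩

theorem g_mem_GG (n : ℕ) (x : g) : ((0, x, 0) : MM g D) ∈ GG P n :=
  mem_GG.2 ⟨zero_mem _, rfl⟩

theorem R_FF_EE {a : D.carrier} {n k : ℕ} (ha : a ∈ FF P n) {m : MM g D} (hm : m ∈ EE P k) :
    ρ.R a m ∈ EE P (n + k) := by
  obtain ⟨c, hc, rfl⟩ := mem_EE.1 hm
  rw [R_D]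
  exact mem_EE.2 ⟨_, FF_br_mem P ha hc, rfl⟩

/-- decompose into `D` and `g` parts -/
theorem GG_split {n : ℕ} {m : MM g D} (hm : m ∈ GG P n) :
    ∃ c ∈ FF P n, ∃ x : g, m = (c, 0, 0) + (0, x, 0) := by
  obtain ⟨h1, h2⟩ := mem_GG.1 hm
  refine ⟨m.1, h1, m.2.1, Prod.ext ?_ (Prod.ext ?_ ?_)⟩ <;> simp [h2]

theorem jj_GG {n k : ℕ} (y : g) {m : MM g D} (hn : 1 ≤ n) (hm : m ∈ GG P n) :
    ρ.R (jj P k y) m ∈ EE P (k + 1 + n) := by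
  obtain ⟨c, hc, x, rfl⟩ := GG_split hm
  rw [map_add, R_D, R_jj_g]
  refine add_mem (mem_EE.2 ⟨_, FF_br_mem P (Mono.base k y).mem hc, rfl⟩)
    (mem_EE.2 ⟨_, FF_mono P ?_ (DJ_mem P (k + 1) x y), rfl⟩)
  omega

theorem Mono_g {n : ℕ} {j : ℤ} {b : D.carrier} (hb : Mono P n j b) :
    ∀ x : g, ρ.R b (0, x, 0) ∈ EE P (n + 1) := by
  have h0 : ∀ k y, ∀ x : g, ρ.R (jj P k y) (0, x, 0) ∈ EE P (k + 1 + 1) := by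
    intro k y x
    rw [R_jj_g]
    exact mem_EE.2 ⟨_, DJ_mem P (k + 1) x y, rfl⟩
  induction hb with
  | base k y => exact h0 k y
  | step k y n j b hb ih =>
    intro x
    rw [R_step ρ k y hb.grade]
    simp only [LinearMap.sub_apply, LinearMap.smul_apply, Module.End.mul_apply]
    refine sub_mem ?_ (Submodule.smul_mem _ _ ?_)
    · exact EE_mono (by omega) (R_FF_EE ρ (Mono.base k y).mem (ih x))
    · exact EE_mono (by omega) (R_FF_EE ρ hb.mem (h0 k y x))

theorem Del_jj_g (k : ℕ) (x y : g) : ∃ z : g, Del ρ (-1) (jj P k y) (0, x, 0) = (0, z, 0) := by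
  cases k with
  | zero => exact ⟨_, Del_jj_g_zero ρ x y⟩
  | succ k => exact ⟨0, Del_jj_g_succ ρ k x y⟩

theorem Del_jj_EE (k : ℕ) (y : g) {n : ℕ} {m : MM g D} (hm : m ∈ EE P n) :
    Del ρ (-1) (jj P k y) m = 0 := by
  obtain ⟨c, hc, rfl⟩ := mem_EE.1 hm
  have := Del_D ρ (jj_grade P k y) c
  rwa [odd_sign_one] at this

theorem sign_step (k : ℕ) (j : ℤ) :
    (-1 : ℝ) ^ (1 - 2 * ((k : ℤ) + 1) + j) = -(-1 : ℝ) ^ j := by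
  rw [neg_one_zpow_add, odd_sign_one]
  ring

theorem Del_Mono_g {n : ℕ} {j : ℤ} {b : D.carrier} (hb : Mono P n j b) :
    ∀ x : g, Del ρ ((-1 : ℝ) ^ j) b (0, x, 0) ∈ GG P n := by
  induction hb with
  | base k y =>
    intro x
    rw [odd_sign_one]
    obtain ⟨z, hz⟩ := Del_jj_g ρ k x y
    rw [hz]
    exact g_mem_GG _ _
  | step k y n j b hb ih =>
    intro x
    have hn := hb.pos
    rw [sign_step, Del_step ρ k y hb.grade]
    simp only [LinearMap.sub_apply, LinearMap.smul_apply, Module.End.mul_apply]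
    rw [Del_jj_EE ρ k y (Mono_g ρ hb x)]
    obtain ⟨z, hz⟩ := Del_jj_g ρ k x y
    rw [hz, R_jj_g, Del_D ρ hb.grade, smul_zero, sub_zero, zero_sub]
    refine sub_mem (neg_mem ?_) ?_
    · exact EE_le_GG _ (EE_mono (by omega) (Mono_g ρ hb z))
    · exact EE_le_GG _ (jj_GG ρ y hn (ih x))

theorem Del_Mono_one {n : ℕ} {j : ℤ} {b : D.carrier} (hb : Mono P n j b) :
    Del ρ ((-1 : ℝ) ^ j) b (0, 0, 1) - ((-1 : ℝ) ^ j * n) • ((b, 0, 0) : MM g D) ∈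
      GG P (n - 1) ∧
    (n = 1 → Del ρ ((-1 : ℝ) ^ j) b (0, 0, 1) - ((-1 : ℝ) ^ j * n) • ((b, 0, 0) : MM g D) = 0) := by
  induction hb with
  | base k y =>
    have h : Del ρ ((-1 : ℝ) ^ (1 - 2 * ((k : ℤ) + 1))) (jj P k y) (0, 0, 1)
      - ((-1 : ℝ) ^ (1 - 2 * ((k : ℤ) + 1)) * ((k + 1 : ℕ) : ℝ)) •
        ((jj P k y, 0, 0) : MM g D) = 0 := by
      rw [odd_sign_one, Del_jj_one, ← sub_smul]
      push_cast
      ring_nf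
      simp
    rw [h]
    exact ⟨zero_mem _, fun _ => rfl⟩
  | step k y n j b hb ih =>
    have hn := hb.pos
    refine ⟨?_, fun h => by omega⟩
    obtain ⟨ih1, ih2⟩ := ih
    rw [sign_step, Del_step ρ k y hb.grade]
    simp only [LinearMap.sub_apply, LinearMap.smul_apply, Module.End.mul_apply]
    set s : ℝ := (-1 : ℝ) ^ j with hs
    set e := Del ρ s b (0, 0, 1) - (s * n) • ((b, 0, 0) : MM g D) with he
    have he' : Del ρ s b (0, 0, 1) = e + (s * n) • ((b, 0, 0) : MM g D) := by
      rw [he]; abel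
    have h1 : ρ.R (jj P k y) e ∈ GG P (k + 1 + n - 1) := by
      by_cases h1 : n = 1
      · rw [ih2 h1, map_zero]
        exact zero_mem _
      · exact EE_le_GG _ (EE_mono (by omega) (jj_GG ρ (n := n - 1) y (by omega) ih1))
    have h2 : Del ρ (-1) (jj P k y) (ρ.R b (0, 0, 1)) ∈ GG P (k + 1 + n - 1) := by
      have h3 : ρ.R b (0, 0, 1) = ((ρ.R b (0, 0, 1)).1, 0, 0) + (0, (ρ.R b (0, 0, 1)).2.1, 0) := by
        refine Prod.ext ?_ (Prod.ext ?_ ?_) <;> simp [R_third ρ hb]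
      rw [h3, map_add]
      obtain ⟨z, hz⟩ := Del_jj_g ρ k (ρ.R b (0, 0, 1)).2.1 y
      have h4 := Del_D ρ (jj_grade P k y) (ρ.R b (0, 0, 1)).1
      rw [odd_sign_one] at h4
      rw [hz, h4, zero_add]
      exact g_mem_GG _ _
    have h3 : Del ρ s b (ρ.R (jj P k y) (0, 0, 1)) ∈ GG P (k + 1 + n - 1) := by
      rw [R_jj_one]
      exact GG_mono (by omega) (Del_Mono_g ρ hb _)
    have h4 : D.bracket b (jj P k y) = (-s) • D.bracket (jj P k y) b := by
      rw [D.antisymm _ _ b hb.grade _ (jj_grade P k y), mul_comm, odd_sign]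
    have h5 : Del ρ (-1) (jj P k y) (ρ.R b (0, 0, 1)) - ρ.R b (Del ρ (-1) (jj P k y) (0, 0, 1))
        - ρ.R (jj P k y) (Del ρ s b (0, 0, 1)) - s • Del ρ s b (ρ.R (jj P k y) (0, 0, 1))
        - (-s * ((k + 1 + n : ℕ) : ℝ)) • ((D.bracket (jj P k y) b, 0, 0) : MM g D)
        = Del ρ (-1) (jj P k y) (ρ.R b (0, 0, 1)) - ρ.R (jj P k y) e
          - s • Del ρ s b (ρ.R (jj P k y) (0, 0, 1)) := by
      rw [Del_jj_one, he', map_add, map_smul, map_smul, R_D, R_D, h4]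
      have h6 : (((-s) • D.bracket (jj P k y) b, 0, 0) : MM g D) =
          (-s) • (D.bracket (jj P k y) b, 0, 0) := by
        simp
      rw [h6]
      push_cast
      module
    rw [h5]
    exact sub_mem (sub_mem h2 h1) (Submodule.smul_mem _ _ h3)

end Estimates
section Final

variable {g : Type} [LieRing g] [LieAlgebra ℝ g] {D : DGLA}

theorem exists_parity (D : DGLA) : ∃ σ : D.carrier →ₗ[ℝ] D.carrier,
    ∀ i, ∀ a ∈ D.grade i, σ a = ((-1 : ℝ) ^ i) • a := by
  let e := LinearEquiv.ofBijective (DirectSum.coeLinearMap D.grade) D.isInternal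
  refine ⟨DirectSum.toModule ℝ ℤ D.carrier (fun i => ((-1 : ℝ) ^ i) • (D.grade i).subtype) ∘ₗ
    e.symm.toLinearMap, ?_⟩
  intro i a ha
  have h : e.symm a = DirectSum.lof ℝ ℤ (fun i => D.grade i) i ⟨a, ha⟩ := by
    rw [LinearEquiv.symm_apply_eq]
    exact (DirectSum.coeLinearMap_lof D.grade i ⟨a, ha⟩).symm
  rw [LinearMap.comp_apply, LinearEquiv.coe_coe, h, DirectSum.toModule_lof]
  rfl

theorem grade_disjoint (D : DGLA) {i j : ℤ} (hij : i ≠ j) {a : D.carrier} (hi : a ∈ D.grade i)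
    (hj : a ∈ D.grade j) : a = 0 :=
  Submodule.disjoint_def.1 (D.isInternal.submodule_iSupIndep.pairwiseDisjoint hij) a hi hj

/-- a Lie algebra as a DGLA concentrated in degree zero -/
def lieDGLA (g : Type) [LieRing g] [LieAlgebra ℝ g] : DGLA where
  carrier := g
  grade := fun i => if i = 0 then ⊤ else ⊥
  isInternal := by
    rw [DirectSum.isInternal_submodule_iff_iSupIndep_and_iSup_eq_top]
    constructor
    · intro i
      by_cases hi : i = 0
      · have : (⨆ j, ⨆ (_ : j ≠ i), (if j = 0 then ⊤ else ⊥ : Submodule ℝ g)) = ⊥ := by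
          refine iSup_eq_bot.2 fun j => iSup_eq_bot.2 fun hj => ?_
          rw [if_neg]
          rintro rfl
          exact hj hi.symm
        rw [this]
        exact disjoint_bot_right
      · simp only [if_neg hi]
        exact disjoint_bot_left
    · rw [eq_top_iff]
      exact le_iSup_of_le 0 (by simp)
  bracket := (LieModule.toEnd ℝ g g : g →ₗ[ℝ] g →ₗ[ℝ] g)
  d := 0
  bracket_grade := by
    intro i j a ha b hb
    by_cases hi : i = 0
    · by_cases hj : j = 0
      · simp [hi, hj]
      · have : b = 0 := by simpa [hj] using hb
        simp [this]
    · have : a = 0 := by simpa [hi] using ha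
      simp [this]
  d_grade := fun i a _ => zero_mem _
  d_sq := fun a => rfl
  antisymm := by
    intro i j a ha b hb
    by_cases hi : i = 0
    · subst hi
      simp
    · have : a = 0 := by simpa [hi] using ha
      simp [this]
  jacobi := by
    intro i j a ha b hb c
    by_cases hi : i = 0
    · subst hi
      simp
    · have : a = 0 := by simpa [hi] using ha
      simp [this]
  leibniz := by
    intros
    simp

theorem l_injective (P : DgPresentation g D) {x : g} (hx : P.l x = 0) : x = 0 := by
  obtain ⟨φ, ⟨-, -, h, -⟩, -⟩ := P.free (lieDGLA g) (LinearMap.id : g →ₗ[ℝ] g) (fun _ => 0)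
    (fun _ _ _ => rfl) (fun x => by
      change LinearMap.id x ∈ (if (0 : ℤ) = 0 then ⊤ else ⊥ : Submodule ℝ g)
      rw [if_pos rfl]
      exact Submodule.mem_top) (fun k v => zero_mem _)
    (fun x y => rfl) (fun k x v => by
      refine (map_zero _).trans ?_
      exact (Finset.sum_eq_zero fun _ _ => rfl).symm)
  have h1 := h x
  rw [hx, map_zero] at h1
  exact h1.symm

variable {P : DgPresentation g D} (ρ : DgRep P)

/-- first component of the action on `1` -/
def hh : D.carrier →ₗ[ℝ] D.carrier :=
  LinearMap.fst ℝ D.carrier (g × ℝ) ∘ₗ (LinearMap.applyₗ ((0, 0, 1) : MM g D)) ∘ₗ ρ.R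

theorem hh_apply (a : D.carrier) : hh ρ a = (ρ.R a (0, 0, 1)).1 := rfl

theorem hh_grade {i : ℤ} {a : D.carrier} (ha : a ∈ D.grade i) : hh ρ a ∈ D.grade (i - 1) := by
  have h := ρ.R_gr i a ha 0 (0, 0, 1) ⟨zero_mem _, zero_mem _, by simp⟩
  have h1 := h.1
  rwa [add_zero] at h1

theorem J0_mem (x : g) {n : ℕ} (hn : 1 ≤ n) : jj P 0 x ∈ FF P n :=
  FF_mono P hn (Mono.base 0 x).mem

theorem homotopy (σ : D.carrier →ₗ[ℝ] D.carrier)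
    (hσ : ∀ i, ∀ a ∈ D.grade i, σ a = ((-1 : ℝ) ^ i) • a) (n : ℕ) (hn : 1 ≤ n) :
    LinearMap.range P.l ⊔ FF P (n + 1) ≤ (LinearMap.range P.l ⊔ FF P n).comap
      (D.d ∘ₗ hh ρ - hh ρ ∘ₗ D.d - ((n + 1 : ℕ) : ℝ) • σ) := by
  refine sup_le ?_ (FF_ind P _ ?_)
  · rintro _ ⟨x, rfl⟩
    refine Submodule.mem_sup_left ?_
    simp only [LinearMap.sub_apply, LinearMap.comp_apply, LinearMap.smul_apply, P.d_l, map_zero,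
      hh_apply, R_l_apply, hσ 0 _ (P.l_grade x), zpow_zero, one_smul, sub_zero, zero_sub]
    exact neg_mem (Submodule.smul_mem _ _ ⟨x, rfl⟩)
  · intro m j b hm hb
    refine Submodule.mem_sup_right ?_
    have hmpos := hb.pos
    have h1 := (mem_GG.1 (Del_Mono_one ρ hb).1).1
    simp only [Del, LinearMap.sub_apply, LinearMap.smul_apply, Module.End.mul_apply, del_one,
      map_zero, smul_zero, sub_zero, Prod.fst_sub, Prod.smul_fst] at h1
    simp only [del_apply] at h1
    simp only [LinearMap.sub_apply, LinearMap.comp_apply, LinearMap.smul_apply, hh_apply,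
      hσ j b hb.grade]
    have h2 := FF_mono P (show m - 1 ≤ n by omega) h1
    have h3 : jj P 0 (ρ.R b (0, 0, 1)).2.1 ∈ FF P n := J0_mem _ hn
    have h4 : (((n + 1 : ℕ) : ℝ) - m) • (((-1 : ℝ) ^ j) • b) ∈ FF P n := by
      by_cases hmn : m = n + 1
      · rw [hmn, sub_self, zero_smul]
        exact zero_mem _
      · exact Submodule.smul_mem _ _ (Submodule.smul_mem _ _ (FF_mono P (by omega) hb.mem))
    have h5 := sub_mem (add_mem h2 h3) h4
    convert h5 using 1
    module

theorem FF_zero : FF P 0 = ⊥ := by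
  rw [eq_bot_iff]
  refine FF_ind P _ ?_
  intro m j b hm hb
  have := hb.pos
  omega

theorem FF_one {a : D.carrier} (ha : a ∈ FF P 1) : ∃ y, a = jj P 0 y := by
  have h : FF P 1 ≤ LinearMap.range
      ((P.J 0).toLinearMap (fun _ => (0 : g)) 0) := by
    refine FF_ind P _ ?_
    intro m j b hm hb
    cases hb with
    | base k y =>
      obtain rfl : k = 0 := by omega
      refine ⟨y, ?_⟩
      rw [MultilinearMap.toLinearMap_apply]
      unfold jj
      congr 1
      ext i
      obtain rfl : i = 0 := Fin.fin_one_eq_zero i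
      simp
    | step k y n j b hb =>
      have := hb.pos
      omega
  obtain ⟨y, rfl⟩ := h ha
  refine ⟨y, ?_⟩
  rw [MultilinearMap.toLinearMap_apply]
  unfold jj
  congr 1
  ext i
  obtain rfl : i = 0 := Fin.fin_one_eq_zero i
  simp

theorem main_induction (n : ℕ) : ∀ (k : ℤ) (a : D.carrier), a ∈ D.grade k → D.d a = 0 →
    a ∈ LinearMap.range P.l ⊔ FF P (n + 1) → ∃ b ∈ D.grade (k - 1), D.d b = a := by
  obtain ⟨R, h1, h2, h3, h4⟩ := exists_rep P
  let ρ : DgRep P := ⟨R, h1, h2, h3, h4⟩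
  obtain ⟨σ, hσ⟩ := exists_parity D
  induction n with
  | zero =>
    intro k a hk hd ha
    obtain ⟨_, ⟨x, rfl⟩, f, hf, rfl⟩ := Submodule.mem_sup.1 ha
    obtain ⟨y, rfl⟩ := FF_one hf
    rw [map_add, P.d_l, zero_add, d_jj_zero] at hd
    obtain rfl := l_injective P hd
    rw [jj_zero_right, add_zero] at hk ⊢
    by_cases h0 : k = 0
    · subst h0
      refine ⟨jj P 0 x, ?_, d_jj_zero P x⟩
      exact jj_grade P 0 x
    · rw [grade_disjoint D h0 hk (P.l_grade x)]
      exact ⟨0, zero_mem _, map_zero _⟩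
  | succ n ih =>
    intro k a hk hd ha
    have h := homotopy ρ σ hσ (n + 1) (by omega) ha
    simp only [Submodule.mem_comap, LinearMap.sub_apply, LinearMap.comp_apply,
      LinearMap.smul_apply, hd, map_zero, sub_zero, hσ k a hk] at h
    set s : ℝ := (-1 : ℝ) ^ k with hs
    have hss : s * s = 1 := neg_one_zpow_sq k
    have hh1 := hh_grade ρ hk
    have hh2 : D.d (hh ρ a) ∈ D.grade k := by
      have := D.d_grade _ _ hh1
      rwa [sub_add_cancel] at this
    obtain ⟨b, hb, hbd⟩ := ih k _ (sub_mem hh2 (Submodule.smul_mem _ _ (Submodule.smul_mem _ _ hk)))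
      (by rw [map_sub, map_smul, map_smul, hd, D.d_sq]; simp) h
    refine ⟨(((n + 1 + 1 : ℕ) : ℝ)⁻¹ * s) • (hh ρ a - b), Submodule.smul_mem _ _ (sub_mem hh1 hb), ?_⟩
    rw [map_smul, map_sub, hbd, sub_sub_cancel, smul_smul, smul_smul]
    have hne : ((n + 1 + 1 : ℕ) : ℝ) ≠ 0 := by positivity
    have : ((n + 1 + 1 : ℕ) : ℝ)⁻¹ * s * (((n + 1 + 1 : ℕ) : ℝ) * s) = 1 := by
      field_simp
      rw [sq, hss]
    rw [← mul_assoc] at this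
    rw [this, one_smul]

end Final

/-- Theorem `prop:acyclic`.  For a finite-dimensional real Lie algebra `g`,
the DGLA `Dg = g ⋉ 𝓛(S⁺g)`, with differential determined by `d l(x) = 0` and
`d i(x) = [i(x), i(x)]/2 + l(x)`, is acyclic as a cochain complex. -/
theorem Dg_isAcyclic (g : Type) [LieRing g] [LieAlgebra ℝ g] [FiniteDimensional ℝ g]
    (D : DGLA) (P : DgPresentation g D) : D.IsAcyclic := by
  intro k a ha
  obtain ⟨hk, hd⟩ := ha
  have htop : a ∈ LinearMap.range P.l ⊔ FA P := by
    rw [gen_top]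
    exact Submodule.mem_top
  obtain ⟨u, hu, f, hf, rfl⟩ := Submodule.mem_sup.1 htop
  obtain ⟨n, hn⟩ := FA_exists P hf
  obtain ⟨b, hb, hbd⟩ := main_induction (P := P) n k _ hk hd
    (add_mem (Submodule.mem_sup_left hu) (Submodule.mem_sup_right (FF_mono P (Nat.le_succ n) hn)))
  exact ⟨hk, b, hb, hbd⟩
end
end

section
/- Let g be a finite-dimensional real Lie algebra. The cohomology of the free graded Lie algebra 𝓛(S⁺g) (generated by S⁺g=⊕_{n≥1}Sⁿg with deg Sⁿg=1−2n), equipped with the differential determined on generating functions by d i(x)=[i(x),i(x)]/2, is concentrated in degree −1 and is isomorphic to g=S¹g⊂S⁺g; that is, H^{−1}(𝓛(S⁺g))≅g and H^{−k}(𝓛(S⁺g))=0 for k≠1. -/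
noncomputable section

/-- A presentation of the free graded Lie algebra `𝓛(S⁺g)` generated by
`S⁺g = ⊕_{n≥1} Sⁿg` (with `deg Sⁿg = 1 − 2n`), equipped with the differential
determined on generating functions by `d i(x) = [i(x), i(x)]/2`, where
`i(x) = ∑_{k≥1} 𝓘(xᵏ)`.  The symmetric multilinear map `J k` encodes the
generators `𝓘(u)` for `u ∈ S^(k+1) g` via `J k (x, …, x) = 𝓘(x^(k+1))`. -/
structure FreeSgPresentation (g : Type) [LieRing g] [LieAlgebra ℝ g] (D : DGLA) where
  J : (k : ℕ) → MultilinearMap ℝ (fun _ : Fin (k + 1) => g) D.carrier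
  J_symm : ∀ (k : ℕ) (v : Fin (k + 1) → g) (σ : Equiv.Perm (Fin (k + 1))),
    J k (v ∘ σ) = J k v
  J_grade : ∀ (k : ℕ) (v : Fin (k + 1) → g), J k v ∈ D.grade (1 - 2 * ((k : ℤ) + 1))
  d_J_one : ∀ x : g, D.d (J 0 (fun _ => x)) = 0
  d_J : ∀ (k : ℕ) (x : g),
    D.d (J (k + 1) (fun _ => x)) =
      (1 / 2 : ℝ) • ∑ s ∈ Finset.range (k + 1),
        D.bracket (J s (fun _ => x)) (J (k - s) (fun _ => x))
  generates : D.lieSpan {a | ∃ (k : ℕ) (v : Fin (k + 1) → g), a = J k v} = ⊤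
  free : ∀ (B : DGLA)
      (J' : (k : ℕ) → MultilinearMap ℝ (fun _ : Fin (k + 1) => g) B.carrier),
      (∀ (k : ℕ) (v : Fin (k + 1) → g) (σ : Equiv.Perm (Fin (k + 1))), J' k (v ∘ σ) = J' k v) →
      (∀ (k : ℕ) (v : Fin (k + 1) → g), J' k v ∈ B.grade (1 - 2 * ((k : ℤ) + 1))) →
      ∃! φ : D.carrier →ₗ[ℝ] B.carrier,
        (∀ a b, φ (D.bracket a b) = B.bracket (φ a) (φ b)) ∧
        (∀ (n : ℤ), ∀ a ∈ D.grade n, φ a ∈ B.grade n) ∧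
        (∀ (k : ℕ) (v : Fin (k + 1) → g), φ (J k v) = J' k v)

namespace FreeCob

/-- nonzero multi-indices: the letters -/
abbrev Let (m : ℕ) := {α : Fin m →₀ ℕ // α ≠ 0}
/-- free associative algebra on the letters, with basis of words -/
abbrev T (m : ℕ) := AddMonoidAlgebra ℝ (FreeAddMonoid (Let m))

variable {m : ℕ}

/-- the basis element attached to a word -/
def W (l : List (Let m)) : T m := AddMonoidAlgebra.single (FreeAddMonoid.ofList l) 1

/-- linear extension from words -/
def lin {M : Type*} [AddCommGroup M] [Module ℝ M] (f : List (Let m) → M) : T m →ₗ[ℝ] M :=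
  (Finsupp.linearCombination ℝ (fun w => f (FreeAddMonoid.toList w))) ∘ₗ
    (AddMonoidAlgebra.coeffLinearEquiv ℝ).toLinearMap

@[simp] lemma lin_W {M : Type*} [AddCommGroup M] [Module ℝ M] (f : List (Let m) → M)
    (l : List (Let m)) : lin f (W l) = f l := by
  simp [lin, W]

lemma W_mul (l l' : List (Let m)) : W l * W l' = W (l ++ l') := by
  simp [W, AddMonoidAlgebra.single_mul_single]

lemma W_nil : (W [] : T m) = 1 := rfl

/-- span of a set of words -/
def sp (S : Set (List (Let m))) : Submodule ℝ (T m) := Submodule.span ℝ (W '' S)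

lemma W_mem_sp {S : Set (List (Let m))} {l : List (Let m)} (h : l ∈ S) : W l ∈ sp S :=
  Submodule.subset_span ⟨l, h, rfl⟩

lemma mem_sp_of_support {S : Set (List (Let m))} {t : T m}
    (h : ∀ w, w ∈ t.coeff.support → FreeAddMonoid.toList w ∈ S) : t ∈ sp S := by
  have : t = ∑ w ∈ t.coeff.support, t.coeff w • W (FreeAddMonoid.toList w) := by
    have := AddMonoidAlgebra.sum_coeff_single t
    conv_lhs => rw [← this]
    rw [Finsupp.sum]
    refine Finset.sum_congr rfl fun w _ => ?_
    simp [W]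
  rw [this]
  exact Submodule.sum_mem _ fun w hw => Submodule.smul_mem _ _ (W_mem_sp (h w hw))

lemma mem_top (t : T m) : t ∈ sp (Set.univ : Set (List (Let m))) :=
  mem_sp_of_support fun _ _ => trivial

/-- to prove a linear containment, check on words -/
lemma sp_le {S : Set (List (Let m))} {p : Submodule ℝ (T m)} (h : ∀ l ∈ S, W l ∈ p) : sp S ≤ p := by
  refine Submodule.span_le.2 ?_
  rintro _ ⟨l, hl, rfl⟩
  exact h l hl

lemma sp_map {M : Type*} [AddCommGroup M] [Module ℝ M] {S : Set (List (Let m))}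
    {p : Submodule ℝ M} {f : T m →ₗ[ℝ] M} (h : ∀ l ∈ S, f (W l) ∈ p) {t : T m} (ht : t ∈ sp S) :
    f t ∈ p := by
  have : sp S ≤ p.comap f := sp_le h
  exact this ht

lemma sp_eq {M : Type*} [AddCommGroup M] [Module ℝ M] {S : Set (List (Let m))}
    {f f' : T m →ₗ[ℝ] M} (h : ∀ l ∈ S, f (W l) = f' (W l)) {t : T m} (ht : t ∈ sp S) :
    f t = f' t := by
  have : sp S ≤ LinearMap.eqLocus f f' := sp_le h
  exact this ht

lemma T_ext {M : Type*} [AddCommGroup M] [Module ℝ M]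
    {f f' : T m →ₗ[ℝ] M} (h : ∀ l, f (W l) = f' (W l)) : f = f' :=
  LinearMap.ext fun t => sp_eq (fun l _ => h l) (mem_top t)

/-- letter, zero if the index is zero -/
def ell (α : Fin m →₀ ℕ) : T m := if h : α = 0 then 0 else W [⟨α, h⟩]

@[simp] lemma ell_zero : ell (0 : Fin m →₀ ℕ) = 0 := by simp [ell]
lemma ell_coe (α : Let m) : ell α.1 = W [α] := by simp [ell, α.2]
lemma ell_of {α : Fin m →₀ ℕ} (h : α ≠ 0) : ell α = W [⟨α, h⟩] := by simp [ell, h]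

/-- reduced coproduct, as a quadratic element -/
def del (α : Fin m →₀ ℕ) : T m := ∑ p ∈ Finset.HasAntidiagonal.antidiagonal α, ell p.1 * ell p.2

@[simp] lemma del_zero : del (0 : Fin m →₀ ℕ) = 0 := by
  rw [del]; refine Finset.sum_eq_zero fun p hp => ?_
  have : p.1 = 0 := by
    have := Finset.HasAntidiagonal.mem_antidiagonal.1 hp
    exact (add_eq_zero.1 this).1
  simp [this]

/-- differential on words -/
def dW : List (Let m) → T m
  | [] => 0
  | α :: l => del α.1 * W l - W [α] * dW l

/-- cobar differential -/
def dT : T m →ₗ[ℝ] T m := lin dW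

lemma dT_nil : dT (W [] : T m) = 0 := by simp [dT, dW]
lemma dT_one : dT (1 : T m) = 0 := dT_nil

lemma W_cons (α : Let m) (l : List (Let m)) : W (α :: l) = W [α] * W l := by
  rw [W_mul]; rfl

lemma dT_cons (α : Let m) (l : List (Let m)) :
    dT (W (α :: l)) = del α.1 * W l - W [α] * dT (W l) := by
  simp [dT, dW]

lemma dT_ell_mul (α : Fin m →₀ ℕ) (t : T m) :
    dT (ell α * t) = del α * t - ell α * dT t := by
  by_cases h : α = 0
  · simp [h]
  rw [ell_of h]
  have : dT ∘ₗ LinearMap.mulLeft ℝ (W [⟨α, h⟩]) =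
      LinearMap.mulLeft ℝ (del α) - (LinearMap.mulLeft ℝ (W [⟨α, h⟩])) ∘ₗ dT := by
    refine T_ext fun l => ?_
    simp only [LinearMap.comp_apply, LinearMap.mulLeft_apply, LinearMap.sub_apply]
    rw [← W_cons, dT_cons]
  exact congrArg (fun f => f t) this

lemma dT_ell (α : Fin m →₀ ℕ) : dT (ell α) = del α := by
  have := dT_ell_mul α 1
  simpa [dT_one] using this

lemma coassoc (α : Fin m →₀ ℕ) :
    ∑ p ∈ Finset.HasAntidiagonal.antidiagonal α, del p.1 * ell p.2 =
    ∑ p ∈ Finset.HasAntidiagonal.antidiagonal α, ell p.1 * del p.2 := by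
  simp only [del, Finset.sum_mul, Finset.mul_sum, Finset.sum_sigma']
  refine Finset.sum_nbij' (fun x => ⟨(x.2.1, x.2.2 + x.1.2), (x.2.2, x.1.2)⟩)
    (fun x => ⟨(x.1.1 + x.2.1, x.2.2), (x.1.1, x.2.1)⟩) ?_ ?_ ?_ ?_ ?_
  · rintro ⟨⟨a, b⟩, ⟨c, e⟩⟩
    simp only [Finset.mem_sigma, Finset.HasAntidiagonal.mem_antidiagonal]
    rintro ⟨h1, h2⟩
    exact ⟨by rw [← h1, ← h2, add_assoc], trivial⟩
  · rintro ⟨⟨a, b⟩, ⟨c, e⟩⟩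
    simp only [Finset.mem_sigma, Finset.HasAntidiagonal.mem_antidiagonal]
    rintro ⟨h1, h2⟩
    exact ⟨by rw [← h1, ← h2, add_assoc], trivial⟩
  · rintro ⟨⟨a, b⟩, ⟨c, e⟩⟩
    simp only [Finset.mem_sigma, Finset.HasAntidiagonal.mem_antidiagonal]
    rintro ⟨h1, h2⟩
    subst h2; rfl
  · rintro ⟨⟨a, b⟩, ⟨c, e⟩⟩
    simp only [Finset.mem_sigma, Finset.HasAntidiagonal.mem_antidiagonal]
    rintro ⟨h1, h2⟩
    subst h2; rfl
  · rintro ⟨⟨a, b⟩, ⟨c, e⟩⟩ _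
    simp only [mul_assoc]

lemma dT_del_mul (α : Fin m →₀ ℕ) (t : T m) : dT (del α * t) = del α * dT t := by
  have h : ∀ p : (Fin m →₀ ℕ) × (Fin m →₀ ℕ), dT (ell p.1 * ell p.2 * t) =
      del p.1 * ell p.2 * t - ell p.1 * del p.2 * t + ell p.1 * ell p.2 * dT t := by
    intro p
    rw [mul_assoc, dT_ell_mul, dT_ell_mul]
    noncomm_ring
  conv_lhs => rw [del]
  rw [Finset.sum_mul, map_sum, Finset.sum_congr rfl fun p _ => h p, Finset.sum_add_distrib,
    Finset.sum_sub_distrib, ← Finset.sum_mul, ← Finset.sum_mul, ← Finset.sum_mul, coassoc]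
  simp [del]

lemma dT_dT (t : T m) : dT (dT t) = 0 := by
  have : dT ∘ₗ dT = (0 : T m →ₗ[ℝ] T m) := by
    refine T_ext fun l => ?_
    simp only [LinearMap.comp_apply, LinearMap.zero_apply]
    induction l with
    | nil => simp [dT_nil]
    | cons α l ih =>
      rw [dT_cons, map_sub, dT_del_mul, ← ell_coe, dT_ell_mul, ih]
      simp
  exact congrArg (fun f => f t) this

/-- words whose first letter only involves indices `≥ i` -/
def SG (m i : ℕ) : Set (List (Let m)) :=
  {w | ∃ (α : Let m) (l : List (Let m)), w = α :: l ∧ ∀ j : Fin m, α.1 j ≠ 0 → i ≤ j.val}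

/-- the cost of a word : minus its degree -/
def cost (l : List (Let m)) : ℕ := (l.map fun α => 2 * α.1.degree - 1).sum
/-- the excess of a word : weight minus length -/
def exc (l : List (Let m)) : ℕ := (l.map fun α => α.1.degree - 1).sum
/-- the weight of a word -/
def wt (l : List (Let m)) : ℕ := (l.map fun α => α.1.degree).sum

/-- words of given cost and of excess at least e -/
def SU (m p e : ℕ) : Set (List (Let m)) := {w | cost w = p ∧ e ≤ exc w}

lemma deg_pos (α : Let m) : 1 ≤ α.1.degree := by
  rcases Nat.eq_zero_or_pos α.1.degree with h | h
  · exact absurd ((Finsupp.degree_eq_zero_iff _).1 h) α.2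
  · exact h

lemma cost_cons (α : Let m) (l) : cost (α :: l) = (2 * α.1.degree - 1) + cost l := by simp [cost]
lemma exc_cons (α : Let m) (l) : exc (α :: l) = (α.1.degree - 1) + exc l := by simp [exc]
lemma wt_cons (α : Let m) (l) : wt (α :: l) = α.1.degree + wt l := by simp [wt]

lemma mul_mem_sp {S S' S'' : Set (List (Let m))} (h : ∀ l ∈ S, ∀ l' ∈ S', l ++ l' ∈ S'')
    {t t' : T m} (ht : t ∈ sp S) (ht' : t' ∈ sp S') : t * t' ∈ sp S'' := by
  have h1 : ∀ l ∈ S, W l * t' ∈ sp S'' := fun l hl =>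
    sp_map (f := LinearMap.mulLeft ℝ (W l)) (fun l' hl' => by
      simpa [W_mul] using W_mem_sp (h l hl l' hl')) ht'
  exact sp_map (f := LinearMap.mulRight ℝ t') (fun l hl => by simpa using h1 l hl) ht

lemma del_mem (α : Let m) :
    del α.1 ∈ sp {w : List (Let m) | cost w + 1 = 2 * α.1.degree - 1 ∧ exc w + 1 = α.1.degree - 1 ∧
      wt w = α.1.degree} := by
  refine Submodule.sum_mem _ fun p hp => ?_
  have hp := Finset.HasAntidiagonal.mem_antidiagonal.1 hp
  by_cases h1 : p.1 = 0
  · simp [h1]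
  by_cases h2 : p.2 = 0
  · simp [h2]
  rw [ell_of h1, ell_of h2, W_mul]
  refine W_mem_sp ?_
  have e1 := deg_pos ⟨p.1, h1⟩
  have e2 := deg_pos ⟨p.2, h2⟩
  have e3 : α.1.degree = p.1.degree + p.2.degree := by rw [← hp]; simp
  simp [cost, exc, wt, e3]
  simp at e1 e2
  omega

lemma dT_W_mem (l : List (Let m)) :
    dT (W l) ∈ sp {w : List (Let m) | cost w + 1 = cost l ∧ exc w + 1 = exc l ∧ wt w = wt l} := by
  induction l with
  | nil => simp [dT_nil]
  | cons α l ih =>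
    rw [dT_cons]
    refine Submodule.sub_mem _ ?_ ?_
    · refine mul_mem_sp (S' := {l}) ?_ (del_mem α) (W_mem_sp rfl)
      rintro l₁ ⟨h1, h2, h3⟩ l' rfl
      simp only [cost, exc, wt, List.map_append, List.sum_append, Set.mem_ofPred_eq, List.map_cons,
        List.sum_cons] at *
      omega
    · refine mul_mem_sp (S := {[α]}) ?_ (W_mem_sp rfl) ih
      rintro l' rfl l₁ ⟨h1, h2, h3⟩
      simp only [cost, exc, wt, List.map_append, List.sum_append, Set.mem_ofPred_eq, List.map_cons,
        List.sum_cons, List.map_nil, List.sum_nil] at *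
      omega

lemma dT_SU {p e : ℕ} {t : T m} (ht : t ∈ sp (SU m (p + 1) (e + 1))) : dT t ∈ sp (SU m p e) := by
  refine sp_map (f := dT) (fun l hl => ?_) ht
  refine (sp_le ?_ : _ ≤ sp (SU m p e)) (dT_W_mem l)
  rintro w ⟨h1, h2, h3⟩
  refine W_mem_sp ?_
  obtain ⟨h4, h5⟩ := hl
  exact ⟨by omega, by omega⟩

/-- `e_i` as a letter -/
def eL (i : Fin m) : Let m := ⟨Finsupp.single i 1, by simp⟩

/-- adding an index to a letter -/
def addL (i : Fin m) (α : Let m) : Let m := ⟨α.1 + Finsupp.single i 1, by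
  intro h; have := (add_eq_zero.1 h).1; exact α.2 this⟩

/-- add `i` to the first letter -/
def Mop (i : Fin m) : T m →ₗ[ℝ] T m := lin fun l => match l with
  | [] => 0
  | α :: l => W (addL i α :: l)

/-- remove first letter `e_i` -/
def Pop (i : Fin m) : T m →ₗ[ℝ] T m := lin fun l => match l with
  | [] => 0
  | α :: l => if α = eL i then W l else 0

lemma Mop_cons (i : Fin m) (α : Let m) (l) : Mop i (W (α :: l)) = W (addL i α :: l) := by
  simp [Mop]

lemma Mop_mul (i : Fin m) (α : Let m) (t : T m) : Mop i (W [α] * t) = W [addL i α] * t := by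
  have : Mop i ∘ₗ LinearMap.mulLeft ℝ (W [α]) = LinearMap.mulLeft ℝ (W [addL i α]) := by
    refine T_ext fun l => ?_
    simp only [LinearMap.comp_apply, LinearMap.mulLeft_apply]
    rw [← W_cons, Mop_cons, ← W_cons]
  exact congrArg (fun f => f t) this

lemma Pop_mul (i : Fin m) (t : T m) : Pop i (W [eL i] * t) = t := by
  have : Pop i ∘ₗ LinearMap.mulLeft ℝ (W [eL i]) = LinearMap.id := by
    refine T_ext fun l => ?_
    simp only [LinearMap.comp_apply, LinearMap.mulLeft_apply, LinearMap.id_apply]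
    rw [← W_cons]; simp [Pop]
  exact congrArg (fun f => f t) this

lemma addL_ne (i : Fin m) (α : Let m) : addL i α ≠ eL i := by
  intro h
  have := congrArg Subtype.val h
  simp [addL, eL] at this
  exact α.2 this

lemma Pop_Mop (i : Fin m) (t : T m) : Pop i (Mop i t) = 0 := by
  have : Pop i ∘ₗ Mop i = 0 := by
    refine T_ext fun l => ?_
    cases l with
    | nil => simp [Mop]
    | cons α l => simp [Mop, Pop, addL_ne]
  exact congrArg (fun f => f t) this

lemma Pop_SG (i : Fin m) {t : T m} (ht : t ∈ sp (SG m (i + 1))) : Pop i t = 0 := by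
  refine sp_eq (f' := 0) ?_ ht
  rintro _ ⟨α, l, rfl, h⟩
  have : α ≠ eL i := by
    rintro rfl
    have := h i (by simp [eL])
    omega
  simp [Pop, this]

lemma SG_mul {i : ℕ} {α : Fin m →₀ ℕ} (h : ∀ j : Fin m, α j ≠ 0 → i ≤ j.val) (t : T m) :
    ell α * t ∈ sp (SG m i) := by
  by_cases h0 : α = 0
  · simp [h0]
  rw [ell_of h0]
  refine mul_mem_sp (S := {[(⟨α, h0⟩ : Let m)]}) ?_ (W_mem_sp rfl) (mem_top t)
  rintro _ rfl l' _
  exact ⟨⟨α, h0⟩, l', rfl, h⟩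

lemma sum_antidiag_add (i : Fin m) (α : Fin m →₀ ℕ) {M : Type*} [AddCommMonoid M]
    (F : (Fin m →₀ ℕ) → (Fin m →₀ ℕ) → M) :
    ∑ p ∈ Finset.HasAntidiagonal.antidiagonal (α + Finsupp.single i 1), F p.1 p.2 =
      ∑ p ∈ Finset.HasAntidiagonal.antidiagonal α, F (p.1 + Finsupp.single i 1) p.2 +
      ∑ p ∈ (Finset.HasAntidiagonal.antidiagonal (α + Finsupp.single i 1)).filter (fun p => p.1 i = 0), F p.1 p.2 := by
  rw [← Finset.sum_filter_not_add_sum_filter _ (fun p => p.1 i = 0)]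
  congr 1
  symm
  refine Finset.sum_nbij' (fun p => (p.1 + Finsupp.single i 1, p.2))
    (fun p => (p.1 - Finsupp.single i 1, p.2)) ?_ ?_ ?_ ?_ ?_
  · rintro ⟨a, b⟩ h
    simp only [Finset.HasAntidiagonal.mem_antidiagonal, Finset.mem_filter] at h ⊢
    refine ⟨by rw [← h]; abel, by simp⟩
  · rintro ⟨a, b⟩ h
    simp only [Finset.HasAntidiagonal.mem_antidiagonal, Finset.mem_filter] at h ⊢
    ext j
    have := congrArg (fun f => f j) h.1
    simp only [Finsupp.add_apply, Finsupp.tsub_apply] at this ⊢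
    by_cases hj : i = j
    · subst hj; simp at this ⊢; omega
    · simp [hj] at this ⊢; omega
  · rintro ⟨a, b⟩ h
    simp
  · rintro ⟨a, b⟩ h
    simp only [Finset.HasAntidiagonal.mem_antidiagonal, Finset.mem_filter] at h ⊢
    simp only [Prod.mk.injEq, and_true]
    ext j
    by_cases hj : i = j
    · subst hj; simp; omega
    · simp [hj]
  · rintro ⟨a, b⟩ h; rfl

lemma key (i : Fin m) {b : T m} (hb : b ∈ sp (SG m i)) :
    dT (Mop i b) - Mop i (dT b) - W [eL i] * b ∈ sp (SG m (i + 1)) := by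
  refine sp_map (f := dT ∘ₗ Mop i - Mop i ∘ₗ dT - LinearMap.mulLeft ℝ (W [eL i])) ?_ hb
  rintro _ ⟨α, l, rfl, h⟩
  simp only [LinearMap.comp_apply, LinearMap.mulLeft_apply, LinearMap.sub_apply]
  rw [Mop_cons, dT_cons, dT_cons, map_sub, Mop_mul, W_cons α l]
  have h1 : del (addL i α).1 * W l = ∑ p ∈ Finset.HasAntidiagonal.antidiagonal (α.1 + Finsupp.single i 1),
      ell p.1 * ell p.2 * W l := by
    rw [del, Finset.sum_mul]; rfl
  have h2 : ∑ p ∈ Finset.HasAntidiagonal.antidiagonal α.1, ell (p.1 + Finsupp.single i 1) * ell p.2 * W l =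
      Mop i (del α.1 * W l) + W [eL i] * (W [α] * W l) := by
    rw [del, Finset.sum_mul, map_sum]
    have hm : ((0 : Fin m →₀ ℕ), α.1) ∈ Finset.HasAntidiagonal.antidiagonal α.1 := by simp
    rw [← Finset.add_sum_erase _ _ hm, ← Finset.add_sum_erase _ _ hm, add_comm]
    congr 1
    · have : ∀ p ∈ (Finset.HasAntidiagonal.antidiagonal α.1).erase (0, α.1),
          ell (p.1 + Finsupp.single i 1) * ell p.2 * W l = Mop i (ell p.1 * ell p.2 * W l) := by
        intro p hp
        have h0 : p.1 ≠ 0 := by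
          intro h0
          rw [Finset.mem_erase, Finset.HasAntidiagonal.mem_antidiagonal] at hp
          refine hp.1 (Prod.ext h0 ?_)
          rw [← hp.2, h0]; simp
        rw [ell_of h0, mul_assoc, mul_assoc, Mop_mul, ← ell_coe]; rfl
      rw [Finset.sum_congr rfl this]
      simp
    · rw [ell_coe, zero_add, ← ell_coe (eL i), mul_assoc]; rfl
  rw [h1, sum_antidiag_add i α.1 (fun a b => ell a * ell b * W l), h2]
  have h3 : ∑ p ∈ (Finset.HasAntidiagonal.antidiagonal (α.1 + Finsupp.single i 1)).filter (fun p => p.1 i = 0),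
      ell p.1 * ell p.2 * W l ∈ sp (SG m (i + 1)) := by
    refine Submodule.sum_mem _ fun p hp => ?_
    simp only [Finset.HasAntidiagonal.mem_antidiagonal, Finset.mem_filter] at hp
    rw [mul_assoc]
    refine SG_mul (fun j hj => ?_) _
    have hij : j ≠ i := by rintro rfl; exact hj hp.2
    have := congrArg (fun f => f j) hp.1
    simp only [Finsupp.add_apply, Finsupp.single_apply, hij.symm, if_false] at this
    have h5 := h j (by omega)
    have : (i : ℕ) ≠ j := fun h => hij (Fin.ext h.symm)
    omega
  convert h3 using 1
  abel

end FreeCob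

namespace FreeCob
variable {m : ℕ}

lemma mem_sp_iff {S : Set (List (Let m))} {t : T m} :
    t ∈ sp S ↔ ∀ w, w ∈ t.coeff.support → FreeAddMonoid.toList w ∈ S := by
  refine ⟨fun ht => ?_, mem_sp_of_support⟩
  have key : sp S ≤ AddMonoidAlgebra.gradeBy ℝ (fun w => FreeAddMonoid.toList w ∈ S) True := by
    refine sp_le fun l hl => ?_
    have := AddMonoidAlgebra.single_mem_gradeBy (R := ℝ)
      (fun w : FreeAddMonoid (Let m) => FreeAddMonoid.toList w ∈ S) (FreeAddMonoid.ofList l) 1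
    simpa [hl, W] using this
  intro w hw
  have := key ht w hw
  simpa using this

lemma sp_inter {S S' : Set (List (Let m))} {t : T m} (h : t ∈ sp S) (h' : t ∈ sp S') :
    t ∈ sp (S ∩ S') :=
  mem_sp_iff.2 fun w hw => ⟨mem_sp_iff.1 h w hw, mem_sp_iff.1 h' w hw⟩

lemma sp_mono {S S' : Set (List (Let m))} (h : S ⊆ S') : sp S ≤ sp S' :=
  sp_le fun _ hl => W_mem_sp (h hl)

lemma decomp {p : ℕ} (i : Fin m) {a : T m} (ha : a ∈ sp (SU m (p + 1) 1 ∩ SG m i)) :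
    ∃ b ∈ sp (SG m i), ∃ c ∈ sp (SU m p 1), ∃ a' ∈ sp (SG m (i + 1)),
      a = Mop i b + W [eL i] * c + a' := by
  have key : sp (SU m (p + 1) 1 ∩ SG m i) ≤ ((sp (SG m i)).map (Mop i) ⊔
      (sp (SU m p 1)).map (LinearMap.mulLeft ℝ (W [eL i]))) ⊔ sp (SG m (i + 1)) := by
    refine sp_le ?_
    rintro _ ⟨⟨h1, h2⟩, α, l, rfl, h⟩
    by_cases hi : α.1 i = 0
    · refine Submodule.mem_sup_right (W_mem_sp ⟨α, l, rfl, fun j hj => ?_⟩)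
      have h3 := h j hj
      have h4 : (i : ℕ) ≠ j := by
        intro h5
        have : i = j := Fin.ext h5
        subst this
        exact hj hi
      omega
    · refine Submodule.mem_sup_left ?_
      by_cases hα : α = eL i
      · subst hα
        refine Submodule.mem_sup_right ⟨W l, W_mem_sp ⟨?_, ?_⟩, ?_⟩
        · simp [cost_cons, eL] at h1; omega
        · simpa [exc_cons, eL] using h2
        · simp [W_cons (eL i) l]
      · refine Submodule.mem_sup_left ?_
        have hle : Finsupp.single i 1 ≤ α.1 := by
          rw [Finsupp.single_le_iff]; omega
        have hne : α.1 - Finsupp.single i 1 ≠ 0 := by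
          intro h0
          apply hα
          apply Subtype.ext
          have := tsub_add_cancel_of_le hle
          rw [h0, zero_add] at this
          exact this.symm
        refine ⟨W (⟨α.1 - Finsupp.single i 1, hne⟩ :: l), W_mem_sp ⟨_, l, rfl, ?_⟩, ?_⟩
        · intro j hj
          refine h j fun h0 => hj ?_
          simp [h0]
        · rw [Mop_cons]
          congr 2
          exact Subtype.ext (tsub_add_cancel_of_le hle)
  obtain ⟨x, hx, a', ha', hxa⟩ := Submodule.mem_sup.1 (key ha)
  obtain ⟨y, ⟨b, hb, rfl⟩, z, ⟨c, hc, rfl⟩, rfl⟩ := Submodule.mem_sup.1 hx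
  exact ⟨b, hb, c, hc, a', ha', hxa.symm⟩

lemma Mop_SU {p e : ℕ} (i : Fin m) {t : T m} (ht : t ∈ sp (SU m p e ∩ SG m i)) :
    Mop i t ∈ sp (SU m (p + 2) (e + 1)) := by
  refine sp_map ?_ ht
  rintro _ ⟨⟨h1, h2⟩, α, l, rfl, h⟩
  rw [Mop_cons]
  refine W_mem_sp ⟨?_, ?_⟩
  · have := deg_pos α
    simp [cost_cons, addL] at h1 ⊢; omega
  · have := deg_pos α
    simp [exc_cons, addL] at h2 ⊢; omega

lemma eL_SU {p e : ℕ} (i : Fin m) {t : T m} (ht : t ∈ sp (SU m p e)) :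
    W [eL i] * t ∈ sp (SU m (p + 1) e) := by
  refine mul_mem_sp (S := {[eL i]}) ?_ (W_mem_sp rfl) ht
  rintro _ rfl l ⟨h1, h2⟩
  refine ⟨?_, ?_⟩
  · simp [cost_cons, eL, h1]; omega
  · simpa [exc_cons, eL] using h2

lemma del_eL (i : Fin m) : del (Finsupp.single i 1) = (0 : T m) := by
  rw [del]
  refine Finset.sum_eq_zero fun p hp => ?_
  have hp := Finset.HasAntidiagonal.mem_antidiagonal.1 hp
  by_cases h1 : p.1 = 0
  · simp [h1]
  by_cases h2 : p.2 = 0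
  · simp [h2]
  have e1 := deg_pos ⟨p.1, h1⟩
  have e2 := deg_pos ⟨p.2, h2⟩
  have := congrArg Finsupp.degree hp
  simp at this e1 e2
  omega

lemma dT_eL (i : Fin m) (t : T m) : dT (W [eL i] * t) = - (W [eL i] * dT t) := by
  rw [← ell_coe, dT_ell_mul]
  simp [eL, del_eL]

theorem acyc (p : ℕ) : ∀ i ≤ m, ∀ c ∈ sp (SU m p 1), dT c ∈ sp (SG m i) →
    ∃ f ∈ sp (SU m (p + 1) 2), c - dT f ∈ sp (SG m i) := by
  induction p with
  | zero =>
    intro i _ c hc _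
    have : c = 0 := by
      have : sp (SU m 0 1) ≤ ⊥ := by
        refine sp_le ?_
        rintro l ⟨h1, h2⟩
        cases l with
        | nil => simp [exc] at h2
        | cons α l => rw [cost_cons] at h1; have := deg_pos α; omega
      simpa using this hc
    exact ⟨0, Submodule.zero_mem _, by simp [this]⟩
  | succ p ihp =>
    intro i
    induction i with
    | zero =>
      intro _ c hc _
      refine ⟨0, Submodule.zero_mem _, ?_⟩
      rw [map_zero, sub_zero]
      refine sp_mono ?_ hc
      rintro l ⟨h1, h2⟩
      cases l with
      | nil => simp [exc] at h2
      | cons α l => exact ⟨α, l, rfl, fun _ _ => Nat.zero_le _⟩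
    | succ i ihi =>
      intro hi c₀ hc₀ hd₀
      have hsub : SG m (i + 1) ⊆ SG m i := by
        rintro _ ⟨α, l, rfl, h⟩
        exact ⟨α, l, rfl, fun j hj => (Nat.le_succ i).trans (h j hj)⟩
      obtain ⟨f₀, hf₀, ha⟩ := ihi (by omega) c₀ hc₀ (sp_mono hsub hd₀)
      have hmono : SU m (p + 1 + 1) 2 ⊆ SU m (p + 1 + 1) 1 := fun l h => ⟨h.1, by have := h.2; omega⟩
      obtain ⟨b, hb, c, hc, a', ha', hdec⟩ := decomp (⟨i, hi⟩ : Fin m)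
        (sp_inter (Submodule.sub_mem _ hc₀ (dT_SU hf₀)) ha)
      have hda : dT (c₀ - dT f₀) ∈ sp (SG m (i + 1)) := by
        rw [map_sub, dT_dT, sub_zero]; exact hd₀
      set I : Fin m := ⟨i, hi⟩ with hI
      have dSG : ∀ {t : T m}, t ∈ sp (SG m (i + 1)) → dT t ∈ sp (SG m (i + 1)) := by
        intro t ht
        refine sp_map (f := dT) ?_ ht
        rintro _ ⟨α, l, rfl, h⟩
        rw [dT_cons]
        refine Submodule.sub_mem _ ?_ ?_
        · rw [del, Finset.sum_mul]
          refine Submodule.sum_mem _ fun q hq => ?_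
          have hq := Finset.HasAntidiagonal.mem_antidiagonal.1 hq
          rw [mul_assoc]
          refine SG_mul (fun j hj => h j ?_) _
          rw [← hq]
          simp only [Finsupp.add_apply]; omega
        · rw [← ell_coe]; exact SG_mul h _
      have hk := key I hb
      -- b = dT c
      have hbc : b = dT c := by
        rw [hdec, map_add, map_add, dT_eL] at hda
        have h1 : Pop I (dT (Mop I b) + -(W [eL I] * dT c) + dT a' -
            (dT (Mop I b) - Mop I (dT b) - W [eL I] * b) - dT a') = 0 :=
          Pop_SG I (Submodule.sub_mem _ (Submodule.sub_mem _ hda hk) (dSG ha'))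
        have h2 : dT (Mop I b) + -(W [eL I] * dT c) + dT a' -
            (dT (Mop I b) - Mop I (dT b) - W [eL I] * b) - dT a' =
            W [eL I] * (b - dT c) + Mop I (dT b) := by noncomm_ring
        rw [h2, map_add, Pop_Mop, Pop_mul, add_zero] at h1
        exact sub_eq_zero.1 h1
      obtain ⟨f, hf, hc'⟩ := ihp i (by omega) c hc (hbc ▸ hb)
      have hk' := key I hc'
      have hdc' : dT (c - dT f) = b := by rw [map_sub, dT_dT, sub_zero, hbc]
      have hc'U : c - dT f ∈ sp (SU m p 1) := Submodule.sub_mem _ hc (dT_SU hf)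
      refine ⟨f₀ + Mop I (c - dT f) - W [eL I] * f, ?_, ?_⟩
      · refine Submodule.sub_mem _ (Submodule.add_mem _ hf₀ ?_) (eL_SU I hf)
        exact Mop_SU I (sp_inter hc'U hc')
      · rw [hdc'] at hk'
        have : c₀ - dT (f₀ + Mop I (c - dT f) - W [eL I] * f) =
            a' - (dT (Mop I (c - dT f)) - Mop I b - W [eL I] * (c - dT f)) := by
          rw [map_sub, map_add, dT_eL]
          have : c₀ = Mop I b + W [eL I] * c + a' + dT f₀ := by rw [← hdec]; abel
          rw [this, mul_sub]
          abel
        rw [this]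
        exact Submodule.sub_mem _ ha' hk'

theorem acyclic_T {p : ℕ} {t : T m} (ht : t ∈ sp (SU m p 1)) (hd : dT t = 0) :
    ∃ f ∈ sp (SU m (p + 1) 2), dT f = t := by
  obtain ⟨f, hf, h⟩ := acyc p m le_rfl t ht (by rw [hd]; exact Submodule.zero_mem _)
  refine ⟨f, hf, ?_⟩
  have : sp (SG m m) ≤ ⊥ := by
    refine sp_le ?_
    rintro _ ⟨α, l, rfl, h⟩
    exfalso
    apply α.2
    ext j
    by_contra h0
    have := h j h0
    omega
  have := this h
  rw [Submodule.mem_bot, sub_eq_zero] at this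
  exact this.symm

end FreeCob

namespace FreeCob
variable {m : ℕ}

/-- cohomological degree of words -/
def degZ (m : ℕ) : FreeAddMonoid (Let m) →+ ℤ :=
  FreeAddMonoid.lift (fun α : Let m => 1 - 2 * (α.1.degree : ℤ))

lemma degZ_ofList (l : List (Let m)) : degZ m (FreeAddMonoid.ofList l) = - (cost l : ℤ) := by
  induction l with
  | nil => simp [cost]
  | cons α l ih =>
    rw [FreeAddMonoid.ofList_cons, map_add, ih, cost_cons]
    have := deg_pos α
    simp [degZ]
    omega

/-- the grading of the free algebra -/
abbrev gT (m : ℕ) (n : ℤ) : Submodule ℝ (T m) := AddMonoidAlgebra.gradeBy ℝ (degZ m) n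

lemma W_mem_gT (l : List (Let m)) : W l ∈ gT m (-(cost l : ℤ)) := by
  rw [← degZ_ofList]
  exact AddMonoidAlgebra.single_mem_gradeBy _ _ _

lemma gT_iff {n : ℤ} {t : T m} : t ∈ gT m n ↔ t ∈ sp {l : List (Let m) | -(cost l : ℤ) = n} := by
  rw [mem_sp_iff]
  refine forall_congr' fun w => ?_
  have := degZ_ofList (FreeAddMonoid.toList w)
  simp at this
  simp [this]

lemma gT_mul {i j : ℤ} {a b : T m} (ha : a ∈ gT m i) (hb : b ∈ gT m j) : a * b ∈ gT m (i + j) :=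
  (AddMonoidAlgebra.gradeBy.gradedMonoid (R := ℝ) (degZ m)).mul_mem ha hb

/-- parity involution -/
def sT : T m →ₗ[ℝ] T m := lin fun l => ((-1 : ℝ) ^ (-(cost l : ℤ))) • W l

lemma sT_of {i : ℤ} {a : T m} (ha : a ∈ gT m i) : sT a = ((-1 : ℝ) ^ i) • a := by
  refine sp_eq (f' := ((-1 : ℝ) ^ i) • LinearMap.id) ?_ (gT_iff.1 ha)
  rintro l rfl
  simp [sT]

/-- graded commutator -/
def brT : T m →ₗ[ℝ] T m →ₗ[ℝ] T m :=
  LinearMap.mk₂ ℝ (fun a b => a * b - (1 / 2 : ℝ) • (b * a + b * sT a + sT b * a - sT b * sT a))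
    (by intro a a' b; simp only [map_add, mul_add, add_mul]; module)
    (by intro c a b
        simp only [map_smul, mul_smul_comm, smul_mul_assoc]; module)
    (by intro a b b'; simp only [map_add, mul_add, add_mul]; module)
    (by intro c a b
        simp only [map_smul, mul_smul_comm, smul_mul_assoc]; module)

lemma sgn_cases (i : ℤ) : (-1 : ℝ) ^ i = 1 ∨ (-1 : ℝ) ^ i = -1 := by
  rcases Int.even_or_odd i with h | h
  · left; exact h.neg_one_zpow
  · right; exact h.neg_one_zpow

lemma brT_of {i j : ℤ} {a b : T m} (ha : a ∈ gT m i) (hb : b ∈ gT m j) :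
    brT a b = a * b - ((-1 : ℝ) ^ (i * j)) • (b * a) := by
  simp only [brT, LinearMap.mk₂_apply, sT_of ha, sT_of hb, mul_smul_comm, smul_mul_assoc]
  rcases Int.even_or_odd i with h | h <;> rcases Int.even_or_odd j with h' | h'
  · rw [h.neg_one_zpow, h'.neg_one_zpow, (h.mul_right j).neg_one_zpow]; module
  · rw [h.neg_one_zpow, h'.neg_one_zpow, (h.mul_right j).neg_one_zpow]; module
  · rw [h.neg_one_zpow, h'.neg_one_zpow, (h'.mul_left i).neg_one_zpow]; module
  · rw [h.neg_one_zpow, h'.neg_one_zpow, (h.mul h').neg_one_zpow]; module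

lemma brT_mem {i j : ℤ} {a b : T m} (ha : a ∈ gT m i) (hb : b ∈ gT m j) :
    brT a b ∈ gT m (i + j) := by
  rw [brT_of ha hb]
  refine Submodule.sub_mem _ (gT_mul ha hb) (Submodule.smul_mem _ _ ?_)
  rw [add_comm]
  exact gT_mul hb ha

lemma brT_jacobi {i j k : ℤ} {a b c : T m} (ha : a ∈ gT m i) (hb : b ∈ gT m j) (hc : c ∈ gT m k) :
    brT a (brT b c) = brT (brT a b) c + ((-1 : ℝ) ^ (i * j)) • brT b (brT a c) := by
  rw [brT_of ha (brT_mem hb hc), brT_of (brT_mem ha hb) hc, brT_of hb (brT_mem ha hc),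
    brT_of ha hb, brT_of hb hc, brT_of ha hc]
  have e1 : (-1 : ℝ) ^ (i * (j + k)) = (-1 : ℝ) ^ (i * j) * (-1 : ℝ) ^ (i * k) := by
    rw [mul_add, zpow_add₀ (by norm_num)]
  have e2 : (-1 : ℝ) ^ ((i + j) * k) = (-1 : ℝ) ^ (i * k) * (-1 : ℝ) ^ (j * k) := by
    rw [add_mul, zpow_add₀ (by norm_num)]
  have e3 : (-1 : ℝ) ^ (j * (i + k)) = (-1 : ℝ) ^ (i * j) * (-1 : ℝ) ^ (j * k) := by
    rw [mul_add, zpow_add₀ (by norm_num), mul_comm j i]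
  rw [e1, e2, e3]
  simp only [mul_sub, sub_mul, smul_sub, mul_smul_comm, smul_mul_assoc, mul_assoc]
  rcases sgn_cases (i * j) with h | h <;> rcases sgn_cases (i * k) with h' | h' <;>
    rcases sgn_cases (j * k) with h'' | h'' <;> rw [h, h', h''] <;> module

lemma brT_jacobi' {i j : ℤ} {a b : T m} (ha : a ∈ gT m i) (hb : b ∈ gT m j) (c : T m) :
    brT a (brT b c) = brT (brT a b) c + ((-1 : ℝ) ^ (i * j)) • brT b (brT a c) := by
  refine sp_eq (S := Set.univ) (f := brT a ∘ₗ brT b)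
    (f' := brT (brT a b) + ((-1 : ℝ) ^ (i * j)) • (brT b ∘ₗ brT a)) ?_ (mem_top c)
  intro l _
  simp only [LinearMap.comp_apply, LinearMap.add_apply, LinearMap.smul_apply]
  exact brT_jacobi ha hb (W_mem_gT l)

/-- the free algebra as a graded Lie algebra (with zero differential) -/
def BT (m : ℕ) : DGLA where
  carrier := T m
  grade := gT m
  isInternal := AddMonoidAlgebra.gradeBy.isInternal (degZ m)
  bracket := brT
  d := 0
  bracket_grade := fun _ _ _ ha _ hb => brT_mem ha hb
  d_grade := fun _ _ _ => Submodule.zero_mem _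
  d_sq := fun _ => by simp
  antisymm := by
    intro i j a ha b hb
    rw [brT_of ha hb, brT_of hb ha, mul_comm j i]
    rcases sgn_cases (i * j) with h | h <;> rw [h] <;> module
  jacobi := fun _ _ _ ha _ hb c => brT_jacobi' ha hb c
  leibniz := by
    intro i a _ b
    simp

/-- Leibniz rule for the cobar differential -/
lemma dT_mul {i : ℤ} {a : T m} (ha : a ∈ gT m i) (b : T m) :
    dT (a * b) = dT a * b + ((-1 : ℝ) ^ i) • (a * dT b) := by
  refine sp_eq (f := dT ∘ₗ LinearMap.mulRight ℝ b)
    (f' := LinearMap.mulRight ℝ b ∘ₗ dT + ((-1 : ℝ) ^ i) • LinearMap.mulRight ℝ (dT b)) ?_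
    (gT_iff.1 ha)
  rintro l rfl
  simp only [LinearMap.comp_apply, LinearMap.mulRight_apply, LinearMap.add_apply,
    LinearMap.smul_apply]
  clear ha
  induction l with
  | nil => simp [W_nil, dT_one, cost]
  | cons α l ih =>
    rw [W_cons, mul_assoc, ← ell_coe, dT_ell_mul, dT_ell_mul, ih]
    have h1 : (-1 : ℝ) ^ (-(cost (α :: l) : ℤ)) = - (-1 : ℝ) ^ (-(cost l : ℤ)) := by
      have := deg_pos α
      have e : -(cost (α :: l) : ℤ) = -(cost l : ℤ) + (1 - 2 * (α.1.degree : ℤ)) := by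
        rw [cost_cons]; omega
      rw [e, zpow_add₀ (by norm_num)]
      have : Odd (1 - 2 * (α.1.degree : ℤ)) := ⟨-(α.1.degree : ℤ), by ring⟩
      rw [this.neg_one_zpow]; ring
    rw [h1]
    simp only [mul_add, sub_mul, mul_assoc, mul_smul_comm]
    module

lemma dT_gT {i : ℤ} {a : T m} (ha : a ∈ gT m i) : dT a ∈ gT m (i + 1) := by
  refine sp_map (f := dT) ?_ (gT_iff.1 ha)
  rintro l rfl
  rw [gT_iff]
  refine sp_mono ?_ (dT_W_mem l)
  rintro w ⟨h1, _, _⟩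
  show -(cost w : ℤ) = _
  omega

lemma dT_brT {i j : ℤ} {a b : T m} (ha : a ∈ gT m i) (hb : b ∈ gT m j) :
    dT (brT a b) = brT (dT a) b + ((-1 : ℝ) ^ i) • brT a (dT b) := by
  rw [brT_of ha hb, brT_of (dT_gT ha) hb, brT_of ha (dT_gT hb), map_sub, map_smul, dT_mul ha,
    dT_mul hb]
  have e1 : (-1 : ℝ) ^ ((i + 1) * j) = (-1 : ℝ) ^ (i * j) * (-1 : ℝ) ^ j := by
    rw [add_mul, one_mul, zpow_add₀ (by norm_num)]
  have e2 : (-1 : ℝ) ^ (i * (j + 1)) = (-1 : ℝ) ^ (i * j) * (-1 : ℝ) ^ i := by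
    rw [mul_add, mul_one, zpow_add₀ (by norm_num)]
  rw [e1, e2]
  rcases sgn_cases (i * j) with h | h <;> rcases sgn_cases i with h' | h' <;>
    rcases sgn_cases j with h'' | h'' <;> rw [h, h', h''] <;> module

end FreeCob

namespace FreeCob
variable {m : ℕ}

open Finset.HasAntidiagonal in
lemma sum_ad_swap {M : Type*} [AddCommMonoid M] (α : Fin m →₀ ℕ)
    (F : (Fin m →₀ ℕ) → (Fin m →₀ ℕ) → M) :
    ∑ p ∈ antidiagonal α, F p.2 p.1 = ∑ p ∈ antidiagonal α, F p.1 p.2 := by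
  refine Finset.sum_nbij' Prod.swap Prod.swap ?_ ?_ ?_ ?_ ?_
  · intro p hp; simpa [add_comm] using hp
  · intro p hp; simpa [add_comm] using hp
  · intro p _; rfl
  · intro p _; rfl
  · intro p _; rfl

/-- multi-index counting the values of a function -/
def cnt {n : ℕ} (f : Fin n → Fin m) : Fin m →₀ ℕ := ∑ j, Finsupp.single (f j) 1

lemma cnt_degree {n : ℕ} (f : Fin n → Fin m) : (cnt f).degree = n := by
  simp [cnt, map_sum]

lemma cnt_ne {n : ℕ} (f : Fin (n + 1) → Fin m) : cnt f ≠ 0 := by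
  intro h
  have := cnt_degree f
  rw [h] at this
  simp at this

lemma cnt_apply {n : ℕ} (f : Fin n → Fin m) (i : Fin m) : cnt f i = Fintype.card {j // f j = i} := by
  rw [cnt, Finsupp.finsetSum_apply, Fintype.card_subtype, Finset.card_filter]
  simp [Finsupp.single_apply]

lemma cnt_comp {n : ℕ} (f : Fin n → Fin m) (σ : Equiv.Perm (Fin n)) : cnt (f ∘ σ) = cnt f := by
  simp only [cnt]
  exact Equiv.sum_comp σ (fun j => Finsupp.single (f j) 1)

lemma exists_perm {n : ℕ} {f f' : Fin n → Fin m} (h : cnt f = cnt f') :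
    ∃ σ : Equiv.Perm (Fin n), f' ∘ σ = f := by
  have hc : ∀ i, Nonempty ({j // f j = i} ≃ {j // f' j = i}) := fun i => by
    refine ⟨Fintype.equivOfCardEq ?_⟩
    rw [← cnt_apply, ← cnt_apply, h]
  have E : ∀ i, {j // f j = i} ≃ {j // f' j = i} := fun i => (hc i).some
  refine ⟨((Equiv.sigmaFiberEquiv f).symm.trans (Equiv.sigmaCongrRight E)).trans
    (Equiv.sigmaFiberEquiv f'), ?_⟩
  funext j
  simp only [Function.comp_apply, Equiv.trans_apply]
  exact (E (f j) ⟨j, rfl⟩).2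

/-- functions with given count -/
def fib (k : ℕ) (α : Fin m →₀ ℕ) : Finset (Fin (k + 1) → Fin m) :=
  Finset.univ.filter fun f => cnt f = α

lemma mem_fib {k : ℕ} {α : Fin m →₀ ℕ} {f : Fin (k + 1) → Fin m} : f ∈ fib k α ↔ cnt f = α := by
  simp [fib]

lemma fib_card_ne {k : ℕ} (f : Fin (k + 1) → Fin m) : ((fib k (cnt f)).card : ℝ) ≠ 0 := by
  have : f ∈ fib k (cnt f) := mem_fib.2 rfl
  exact_mod_cast (Finset.card_pos.2 ⟨f, this⟩).ne'

/-- multi-indices of degree n -/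
def A (m n : ℕ) : Finset (Fin m →₀ ℕ) := Finset.finsuppAntidiag Finset.univ n

lemma mem_A {n : ℕ} {α : Fin m →₀ ℕ} : α ∈ A m n ↔ α.degree = n := by
  simp [A, Finset.mem_finsuppAntidiag, Finsupp.degree_eq_sum]

lemma exists_fun {k : ℕ} {α : Fin m →₀ ℕ} (h : α.degree = k + 1) :
    ∃ f : Fin (k + 1) → Fin m, cnt f = α := by
  have hc : Fintype.card (Σ i : Fin m, Fin (α i)) = k + 1 := by
    rw [← h]; simp [Finsupp.degree_eq_sum]
  let E := (Fintype.equivFinOfCardEq hc).symm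
  refine ⟨fun j => (E j).1, ?_⟩
  ext i
  rw [cnt, Finsupp.finsetSum_apply, Equiv.sum_comp E (fun s => (Finsupp.single s.1 1 : Fin m →₀ ℕ) i),
    Fintype.sum_sigma]
  simp [Finsupp.single_apply]

/-- monomials -/
def pw (ξ : Fin m → ℝ) (α : Fin m →₀ ℕ) : ℝ := MvPolynomial.eval ξ (MvPolynomial.monomial α 1)

lemma pw_add (ξ : Fin m → ℝ) (α β : Fin m →₀ ℕ) : pw ξ (α + β) = pw ξ α * pw ξ β := by
  rw [pw, pw, pw, ← map_mul, MvPolynomial.monomial_mul, one_mul]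

lemma pw_cnt {n : ℕ} (ξ : Fin m → ℝ) (f : Fin n → Fin m) : pw ξ (cnt f) = ∏ j, ξ (f j) := by
  rw [pw, cnt, MvPolynomial.monomial_sum_one, map_prod]
  refine Finset.prod_congr rfl fun j _ => ?_
  rw [MvPolynomial.eval_monomial]; simp

lemma coeff_zero {V : Type*} [AddCommGroup V] [Module ℝ V] (S : Finset (Fin m →₀ ℕ))
    (y : (Fin m →₀ ℕ) → V) (h : ∀ ξ : Fin m → ℝ, ∑ α ∈ S, pw ξ α • y α = 0) :
    ∀ α ∈ S, y α = 0 := by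
  intro α hα
  rw [← Module.forall_dual_apply_eq_zero_iff ℝ]
  intro φ
  have hp : ∑ β ∈ S, MvPolynomial.monomial β (φ (y β)) = (0 : MvPolynomial (Fin m) ℝ) := by
    refine MvPolynomial.funext fun ξ => ?_
    have := congrArg φ (h ξ)
    rw [map_sum, map_zero] at this
    rw [map_sum, map_zero, ← this]
    refine Finset.sum_congr rfl fun β _ => ?_
    rw [map_smul, pw, MvPolynomial.eval_monomial, MvPolynomial.eval_monomial]
    simp [mul_comm]
  have := congrArg (MvPolynomial.coeff α) hp
  rw [MvPolynomial.coeff_sum] at this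
  simpa [MvPolynomial.coeff_monomial, hα] using this

section
variable {g : Type} [LieRing g] [LieAlgebra ℝ g] {D : DGLA} (P : FreeSgPresentation g D)
  (e : Module.Basis (Fin m) ℝ g)

/-- coefficient generators -/
def JJ (α : Fin m →₀ ℕ) : D.carrier := ∑ f ∈ fib (α.degree - 1) α, P.J (α.degree - 1) (e ∘ f)

lemma JJ_eq {k : ℕ} {α : Fin m →₀ ℕ} (h : α.degree = k + 1) :
    JJ P e α = ∑ f ∈ fib k α, P.J k (e ∘ f) := by
  have : α.degree - 1 = k := by omega
  rw [JJ, this]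

@[simp] lemma JJ_zero : JJ P e 0 = 0 := by
  rw [JJ]
  refine Finset.sum_eq_zero fun f hf => ?_
  exact absurd (mem_fib.1 hf) (cnt_ne f)

lemma JJ_grade (α : Fin m →₀ ℕ) : JJ P e α ∈ D.grade (1 - 2 * (α.degree : ℤ)) := by
  by_cases h : α = 0
  · rw [h, JJ_zero]; exact Submodule.zero_mem _
  have := deg_pos ⟨α, h⟩
  obtain ⟨k, hk⟩ : ∃ k, α.degree = k + 1 := ⟨α.degree - 1, by simp at this; omega⟩
  rw [JJ_eq P e hk, hk]
  refine Submodule.sum_mem _ fun f _ => ?_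
  exact_mod_cast P.J_grade k _

lemma J_expand (k : ℕ) (v : Fin (k + 1) → g) :
    P.J k v = ∑ f : Fin (k + 1) → Fin m, (∏ j, e.repr (v j) (f j)) • P.J k (e ∘ f) := by
  conv_lhs => rw [show v = fun j => ∑ i, e.repr (v j) i • e i from
    funext fun j => (e.sum_repr (v j)).symm]
  rw [MultilinearMap.map_sum]
  refine Finset.sum_congr rfl fun f _ => ?_
  rw [MultilinearMap.map_smul_univ]
  rfl

lemma J_diag (k : ℕ) (ξ : Fin m → ℝ) :
    P.J k (fun _ => ∑ i, ξ i • e i) = ∑ α ∈ A m (k + 1), pw ξ α • JJ P e α := by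
  rw [J_expand P e k, ← Finset.sum_fiberwise_of_maps_to (t := A m (k + 1)) (g := cnt)]
  · refine Finset.sum_congr rfl fun α hα => ?_
    rw [JJ_eq P e (mem_A.1 hα), Finset.smul_sum]
    refine Finset.sum_congr rfl fun f hf => ?_
    rw [← mem_fib.1 hf, pw_cnt]
    congr 1
    refine Finset.prod_congr rfl fun j _ => ?_
    simp [Finsupp.single_apply]
  · intro f _
    exact mem_A.2 (cnt_degree f)

lemma J_basis (k : ℕ) (f : Fin (k + 1) → Fin m) :
    P.J k (e ∘ f) = ((fib k (cnt f)).card : ℝ)⁻¹ • JJ P e (cnt f) := by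
  rw [JJ_eq P e (cnt_degree f)]
  have : ∀ f' ∈ fib k (cnt f), P.J k (e ∘ f') = P.J k (e ∘ f) := by
    intro f' hf'
    obtain ⟨σ, rfl⟩ := exists_perm (mem_fib.1 hf')
    rw [← Function.comp_assoc, P.J_symm]
  rw [Finset.sum_congr rfl this, Finset.sum_const, ← Nat.cast_smul_eq_nsmul ℝ, smul_smul,
    inv_mul_cancel₀ (fib_card_ne f), one_smul]

open Finset.HasAntidiagonal in
lemma sum_regroup {M : Type*} [AddCommMonoid M] (k : ℕ) (G : (Fin m →₀ ℕ) → (Fin m →₀ ℕ) → M)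
    (h1 : ∀ β, G 0 β = 0) (h2 : ∀ β, G β 0 = 0) :
    ∑ s ∈ Finset.range (k + 1), ∑ β ∈ A m (s + 1), ∑ γ ∈ A m (k - s + 1), G β γ =
    ∑ α ∈ A m (k + 2), ∑ p ∈ antidiagonal α, G p.1 p.2 := by
  rw [Finset.sum_sigma' (A m (k + 2)) (fun α => antidiagonal α) (fun _ p => G p.1 p.2)]
  have : ∀ s, ∑ β ∈ A m (s + 1), ∑ γ ∈ A m (k - s + 1), G β γ =
      ∑ p ∈ A m (s + 1) ×ˢ A m (k - s + 1), G p.1 p.2 := fun s => (Finset.sum_product' _ _ _).symm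
  rw [Finset.sum_congr rfl fun s _ => this s, Finset.sum_sigma']
  refine Finset.sum_of_injOn (fun x => ⟨x.2.1 + x.2.2, x.2⟩) ?_ ?_ ?_ ?_
  · rintro ⟨s, β, γ⟩ h ⟨s', β', γ'⟩ h' heq
    simp only [Finset.coe_sigma, Set.mem_sigma_iff, Finset.mem_coe, Finset.mem_product, mem_A] at h h'
    simp only [Sigma.mk.injEq, heq_eq_eq, Prod.mk.injEq] at heq
    obtain ⟨_, rfl, rfl⟩ := heq
    have : s = s' := by omega
    subst this; rfl
  · rintro ⟨s, β, γ⟩ h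
    simp only [Finset.coe_sigma, Set.mem_sigma_iff, Finset.mem_coe, Finset.mem_product, mem_A,
      Finset.mem_range, mem_antidiagonal, and_true, map_add] at h ⊢
    omega
  · rintro ⟨α, β, γ⟩ h hn
    simp only [Finset.mem_sigma, mem_A, mem_antidiagonal] at h
    by_cases hβ : β = 0
    · subst hβ; exact h1 _
    by_cases hγ : γ = 0
    · subst hγ; exact h2 _
    exfalso
    apply hn
    have e1 := deg_pos ⟨β, hβ⟩
    have e2 := deg_pos ⟨γ, hγ⟩
    have e3 : β.degree + γ.degree = k + 2 := by rw [← h.1, ← h.2, map_add]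
    simp only at e1 e2
    refine ⟨⟨β.degree - 1, β, γ⟩, ?_, ?_⟩
    · simp only [Finset.coe_sigma, Set.mem_sigma_iff, Finset.mem_coe, Finset.mem_product, mem_A,
        Finset.mem_range]
      omega
    · simp only [Sigma.mk.injEq, heq_eq_eq, and_true]; exact h.2
  · rintro ⟨s, β, γ⟩ h; rfl

open Finset.HasAntidiagonal in
lemma d_JJ (α : Fin m →₀ ℕ) :
    D.d (JJ P e α) = (1 / 2 : ℝ) • ∑ p ∈ antidiagonal α, D.bracket (JJ P e p.1) (JJ P e p.2) := by
  rcases hn : α.degree with _ | _ | k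
  · have : α = 0 := (Finsupp.degree_eq_zero_iff _).1 hn
    subst this
    rw [JJ_zero, map_zero, Finset.sum_eq_zero, smul_zero]
    intro p hp
    have hp := mem_antidiagonal.1 hp
    rw [(add_eq_zero.1 hp).1]; simp
  · rw [Finset.sum_eq_zero, smul_zero]
    · rw [JJ_eq P e hn, map_sum]
      refine Finset.sum_eq_zero fun f _ => ?_
      have : (e ∘ f : Fin (0 + 1) → g) = fun _ => e (f 0) := by
        funext j
        have : j = 0 := Fin.ext (by omega)
        rw [this]; rfl
      rw [this]
      exact P.d_J_one _
    · intro p hp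
      have hp := congrArg Finsupp.degree (mem_antidiagonal.1 hp)
      rw [map_add, hn] at hp
      rcases Nat.eq_zero_or_pos p.1.degree with h | h
      · rw [(Finsupp.degree_eq_zero_iff _).1 h]; simp
      · have : p.2.degree = 0 := by omega
        rw [(Finsupp.degree_eq_zero_iff _).1 this]; simp
  · rw [← sub_eq_zero]
    refine coeff_zero (A m (k + 2)) (fun α => D.d (JJ P e α) - (1 / 2 : ℝ) •
      ∑ p ∈ antidiagonal α, D.bracket (JJ P e p.1) (JJ P e p.2)) (fun ξ => ?_) α (mem_A.2 hn)
    have h := P.d_J k (∑ i, ξ i • e i)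
    simp only [J_diag P e, map_sum, map_smul, LinearMap.sum_apply, LinearMap.smul_apply,
      Finset.smul_sum, smul_smul] at h
    simp only [smul_sub, Finset.sum_sub_distrib, sub_eq_zero, Finset.smul_sum, smul_smul]
    rw [h]
    have hr := sum_regroup (m := m) k (fun β γ => ((1 / 2 : ℝ) * (pw ξ β * pw ξ γ)) •
      D.bracket (JJ P e β) (JJ P e γ)) (by simp) (by simp)
    refine Eq.trans ?_ (hr.trans ?_)
    · refine Finset.sum_congr rfl fun s _ => ?_
      rw [Finset.sum_comm]
      refine Finset.sum_congr rfl fun β _ => Finset.sum_congr rfl fun γ _ => ?_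
      congr 1; ring
    · refine Finset.sum_congr rfl fun β _ => Finset.sum_congr rfl fun p hp => ?_
      rw [← mem_antidiagonal.1 hp, pw_add]
      congr 1; ring

/-- images of generators in the free algebra -/
def Jp (k : ℕ) : MultilinearMap ℝ (fun _ : Fin (k + 1) => g) (T m) :=
  ∑ f : Fin (k + 1) → Fin m,
    ((MultilinearMap.mkPiAlgebra ℝ (Fin (k + 1)) ℝ).compLinearMap (fun j => e.coord (f j))).smulRight
      (((fib k (cnt f)).card : ℝ)⁻¹ • ell (cnt f))

lemma Jp_apply (k : ℕ) (v : Fin (k + 1) → g) : Jp e k v =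
    ∑ f : Fin (k + 1) → Fin m, (∏ j, e.repr (v j) (f j)) •
      (((fib k (cnt f)).card : ℝ)⁻¹ • ell (cnt f)) := by
  simp [Jp]

lemma Jp_symm (k : ℕ) (v : Fin (k + 1) → g) (σ : Equiv.Perm (Fin (k + 1))) :
    Jp e k (v ∘ σ) = Jp e k v := by
  rw [Jp_apply, Jp_apply]
  rw [← Equiv.sum_comp (Equiv.arrowCongr σ.symm (Equiv.refl (Fin m)))]
  refine Finset.sum_congr rfl fun f _ => ?_
  have h1 : (Equiv.arrowCongr σ.symm (Equiv.refl (Fin m))) f = f ∘ σ := by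
    funext j; simp [Equiv.arrowCongr]
  rw [h1, cnt_comp]
  congr 1
  exact Equiv.prod_comp σ (fun j => e.repr (v j) (f j))

lemma ell_gT (α : Fin m →₀ ℕ) : ell α ∈ gT m (1 - 2 * (α.degree : ℤ)) := by
  by_cases h : α = 0
  · rw [h, ell_zero]; exact Submodule.zero_mem _
  rw [ell_of h]
  have := W_mem_gT [(⟨α, h⟩ : Let m)]
  have h2 : 1 ≤ α.degree := deg_pos ⟨α, h⟩
  have h3 : cost [(⟨α, h⟩ : Let m)] = 2 * α.degree - 1 := by simp [cost]
  convert this using 2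
  rw [h3]; omega

lemma Jp_grade (k : ℕ) (v : Fin (k + 1) → g) : Jp e k v ∈ gT m (1 - 2 * ((k : ℤ) + 1)) := by
  rw [Jp_apply]
  refine Submodule.sum_mem _ fun f _ => Submodule.smul_mem _ _ (Submodule.smul_mem _ _ ?_)
  have := ell_gT (cnt f)
  rw [cnt_degree] at this
  exact_mod_cast this

lemma Jp_basis (k : ℕ) (f : Fin (k + 1) → Fin m) :
    Jp e k (e ∘ f) = ((fib k (cnt f)).card : ℝ)⁻¹ • ell (cnt f) := by
  rw [Jp_apply, Finset.sum_eq_single f]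
  · simp
  · intro f' _ hf
    obtain ⟨j, hj⟩ := Function.ne_iff.1 hf
    rw [Finset.prod_eq_zero (Finset.mem_univ j), zero_smul]
    simp [Finsupp.single_apply, hj.symm]
  · intro h; exact absurd (Finset.mem_univ f) h

lemma Jp_sum {k : ℕ} {α : Fin m →₀ ℕ} (h : α.degree = k + 1) :
    ∑ f ∈ fib k α, Jp e k (e ∘ f) = ell α := by
  have : ∀ f ∈ fib k α, Jp e k (e ∘ f) = ((fib k α).card : ℝ)⁻¹ • ell α := by
    intro f hf
    rw [Jp_basis, mem_fib.1 hf]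
  obtain ⟨f, rfl⟩ := exists_fun h
  rw [Finset.sum_congr rfl this, Finset.sum_const, ← Nat.cast_smul_eq_nsmul ℝ, smul_smul,
    mul_inv_cancel₀ (fib_card_ne f), one_smul]

end
end FreeCob

namespace FreeCob
variable {m : ℕ}
section
variable {g : Type} [LieRing g] [LieAlgebra ℝ g] {D : DGLA} (P : FreeSgPresentation g D)
  (e : Module.Basis (Fin m) ℝ g)

lemma exists_iota : ∃ ι : D.carrier →ₗ[ℝ] T m,
    (∀ a b, ι (D.bracket a b) = brT (ι a) (ι b)) ∧
    (∀ (n : ℤ), ∀ a ∈ D.grade n, ι a ∈ gT m n) ∧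
    (∀ (k : ℕ) (v : Fin (k + 1) → g), ι (P.J k v) = Jp e k v) := by
  obtain ⟨φ, ⟨h1, h2, h3⟩, _⟩ := P.free (BT m) (Jp e) (Jp_symm e) (Jp_grade e)
  exact ⟨φ, h1, h2, h3⟩

lemma iota_JJ {ι : D.carrier →ₗ[ℝ] T m} (h : ∀ (k : ℕ) (v : Fin (k + 1) → g), ι (P.J k v) = Jp e k v)
    (α : Fin m →₀ ℕ) : ι (JJ P e α) = ell α := by
  by_cases h0 : α = 0
  · subst h0; simp
  have h2 : 1 ≤ α.degree := deg_pos ⟨α, h0⟩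
  obtain ⟨k, hk⟩ : ∃ k, α.degree = k + 1 := ⟨α.degree - 1, by omega⟩
  rw [JJ_eq P e hk, map_sum, ← Jp_sum e hk]
  exact Finset.sum_congr rfl fun f _ => h _ _

/-- bracket monomials in the generators -/
inductive BW : ℕ → ℤ → D.carrier → Prop
  | gen (α : Let m) : BW α.1.degree (1 - 2 * (α.1.degree : ℤ)) (JJ P e α.1)
  | br {N N' : ℕ} {i j : ℤ} {a b : D.carrier} : BW N i a → BW N' j b →
      BW (N + N') (i + j) (D.bracket a b)

lemma BW_span : Submodule.span ℝ {a : D.carrier | ∃ N i, BW P e N i a} = ⊤ := by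
  rw [eq_top_iff, ← P.generates]
  refine sInf_le ⟨?_, ?_⟩
  · rintro _ ⟨k, v, rfl⟩
    rw [SetLike.mem_coe, J_expand P e]
    refine Submodule.sum_mem _ fun f _ => Submodule.smul_mem _ _ ?_
    rw [J_basis]
    exact Submodule.smul_mem _ _ (Submodule.subset_span ⟨_, _, BW.gen ⟨cnt f, cnt_ne f⟩⟩)
  · intro a ha b hb
    induction ha using Submodule.span_induction with
    | zero => simp
    | add x y _ _ hx hy => rw [map_add, LinearMap.add_apply]; exact Submodule.add_mem _ hx hy
    | smul c x _ hx => rw [map_smul, LinearMap.smul_apply]; exact Submodule.smul_mem _ _ hx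
    | mem a ha =>
      induction hb using Submodule.span_induction with
      | zero => simp
      | add x y _ _ hx hy => rw [map_add]; exact Submodule.add_mem _ hx hy
      | smul c x _ hx => rw [map_smul]; exact Submodule.smul_mem _ _ hx
      | mem b hb =>
        obtain ⟨N, i, ha⟩ := ha
        obtain ⟨N', j, hb⟩ := hb
        exact Submodule.subset_span ⟨_, _, BW.br ha hb⟩

lemma BW_ext {M : Type*} [AddCommGroup M] [Module ℝ M] {f f' : D.carrier →ₗ[ℝ] M}
    (h : ∀ N i a, BW P e N i a → f a = f' a) (a : D.carrier) : f a = f' a := by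
  have : f = f' := by
    refine LinearMap.ext_on (BW_span P e) ?_
    rintro a ⟨N, i, ha⟩
    exact h N i a ha
  rw [this]

lemma BW_grade {N : ℕ} {i : ℤ} {a : D.carrier} (h : BW P e N i a) : a ∈ D.grade i := by
  induction h with
  | gen α => exact JJ_grade P e _
  | br _ _ h h' => exact D.bracket_grade _ _ _ h _ h'

lemma BW_pos {N : ℕ} {i : ℤ} {a : D.carrier} (h : BW P e N i a) : 1 ≤ N := by
  induction h with
  | gen α => exact deg_pos α
  | br _ _ h h' => omega

/-- adjoint action of words -/
def adW : List (Let m) → (D.carrier →ₗ[ℝ] D.carrier)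
  | [] => LinearMap.id
  | α :: l => (D.bracket (JJ P e α.1)).comp (adW l)

def adT : T m →ₗ[ℝ] (D.carrier →ₗ[ℝ] D.carrier) := lin (adW P e)

lemma adW_append (l l' : List (Let m)) : adW P e (l ++ l') = (adW P e l).comp (adW P e l') := by
  induction l with
  | nil => rfl
  | cons α l ih => rw [List.cons_append, adW, adW, ih]; rfl

lemma adT_W (l : List (Let m)) : adT P e (W l) = adW P e l := lin_W _ _

lemma adT_mul (t t' : T m) : adT P e (t * t') = (adT P e t).comp (adT P e t') := by
  have h1 : ∀ l : List (Let m), ∀ t' : T m, adT P e (W l * t') = (adT P e (W l)).comp (adT P e t') := by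
    intro l t'
    refine sp_eq (f := (adT P e).comp (LinearMap.mulLeft ℝ (W l)))
      (f' := (LinearMap.compRight ℝ (adT P e (W l))).comp (adT P e)) ?_ (mem_top t')
    intro l' _
    simp only [LinearMap.comp_apply, LinearMap.mulLeft_apply, LinearMap.compRight_apply, W_mul, adT_W,
      adW_append]
  refine sp_eq (f := (adT P e).comp (LinearMap.mulRight ℝ t'))
      (f' := (LinearMap.lcomp ℝ D.carrier (adT P e t')).comp (adT P e)) ?_ (mem_top t)
  intro l _
  exact h1 l t'

lemma adT_ell (α : Fin m →₀ ℕ) : adT P e (ell α) = D.bracket (JJ P e α) := by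
  by_cases h : α = 0
  · subst h; simp
  · rw [ell_of h, adT_W]; rfl

def rW : List (Let m) → D.carrier
  | [] => 0
  | [α] => (α.1.degree : ℝ) • JJ P e α.1
  | α :: β :: l => D.bracket (JJ P e α.1) (rW (β :: l))

def rr : T m →ₗ[ℝ] D.carrier := lin (rW P e)
def rt : T m →ₗ[ℝ] D.carrier := lin fun l => (wt l : ℝ)⁻¹ • rW P e l

lemma rr_W (l : List (Let m)) : rr P e (W l) = rW P e l := lin_W _ _
lemma rt_W (l : List (Let m)) : rt P e (W l) = (wt l : ℝ)⁻¹ • rW P e l := lin_W _ _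

lemma rW_cons (α : Let m) {l : List (Let m)} (h : l ≠ []) :
    rW P e (α :: l) = D.bracket (JJ P e α.1) (rW P e l) := by
  cases l with
  | nil => exact absurd rfl h
  | cons β l => rfl

lemma rW_append (l : List (Let m)) {l' : List (Let m)} (h : l' ≠ []) :
    rW P e (l ++ l') = adW P e l (rW P e l') := by
  induction l with
  | nil => rfl
  | cons α l ih => rw [List.cons_append, rW_cons _ _ _ (by simp [h]), ih]; rfl

lemma rr_mul (t : T m) {u : T m} (hu : u ∈ sp {l : List (Let m) | l ≠ []}) :
    rr P e (t * u) = adT P e t (rr P e u) := by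
  have h1 : ∀ l : List (Let m), rr P e (W l * u) = adT P e (W l) (rr P e u) := by
    intro l
    refine sp_eq (f := (rr P e).comp (LinearMap.mulLeft ℝ (W l)))
      (f' := (adT P e (W l)).comp (rr P e)) ?_ hu
    intro l' hl'
    simp only [LinearMap.comp_apply, LinearMap.mulLeft_apply, W_mul, adT_W, rr_W]
    exact rW_append P e l hl'
  refine sp_eq (f := (rr P e).comp (LinearMap.mulRight ℝ u))
      (f' := ((adT P e).flip (rr P e u))) ?_ (mem_top t)
  intro l _
  exact h1 l

lemma rt_wt {N : ℕ} {t : T m} (ht : t ∈ sp {l : List (Let m) | wt l = N}) :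
    rt P e t = (N : ℝ)⁻¹ • rr P e t := by
  refine sp_eq (f := rt P e) (f' := (N : ℝ)⁻¹ • rr P e) ?_ ht
  intro l hl
  rw [rt_W, LinearMap.smul_apply, rr_W, show wt l = N from hl]

section iota
variable {ι : D.carrier →ₗ[ℝ] T m} (h1 : ∀ a b, ι (D.bracket a b) = brT (ι a) (ι b))
    (h2 : ∀ (n : ℤ), ∀ a ∈ D.grade n, ι a ∈ gT m n)
    (h3 : ∀ α, ι (JJ P e α) = ell α)
include h1 h2 h3

lemma BW_words {N : ℕ} {i : ℤ} {a : D.carrier} (h : BW P e N i a) :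
    ι a ∈ sp {l : List (Let m) | l ≠ [] ∧ wt l = N} := by
  induction h with
  | gen α =>
    rw [h3, ell_coe]
    exact W_mem_sp ⟨by simp, by simp [wt]⟩
  | br ha hb iha ihb =>
    rw [h1, brT_of (h2 _ _ (BW_grade P e ha)) (h2 _ _ (BW_grade P e hb))]
    refine Submodule.sub_mem _ (mul_mem_sp ?_ iha ihb) (Submodule.smul_mem _ _ (mul_mem_sp ?_ ihb iha))
    · rintro l ⟨hl, hw⟩ l' ⟨hl', hw'⟩
      refine ⟨by simp [hl], ?_⟩
      simp [wt] at hw hw' ⊢; omega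
    · rintro l ⟨hl, hw⟩ l' ⟨hl', hw'⟩
      refine ⟨by simp [hl], ?_⟩
      simp [wt] at hw hw' ⊢; omega

lemma BW_adT {N : ℕ} {i : ℤ} {a : D.carrier} (h : BW P e N i a) :
    adT P e (ι a) = D.bracket a := by
  induction h with
  | gen α => rw [h3, adT_ell]
  | br ha hb iha ihb =>
    rw [h1, brT_of (h2 _ _ (BW_grade P e ha)) (h2 _ _ (BW_grade P e hb)), map_sub, map_smul,
      adT_mul, adT_mul, iha, ihb]
    ext c
    simp only [LinearMap.sub_apply, LinearMap.smul_apply, LinearMap.comp_apply]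
    rw [D.jacobi _ _ _ (BW_grade P e ha) _ (BW_grade P e hb)]
    abel

lemma BW_rr {N : ℕ} {i : ℤ} {a : D.carrier} (h : BW P e N i a) :
    rr P e (ι a) = (N : ℝ) • a := by
  induction h with
  | gen α => rw [h3, ell_coe, rr_W]; rfl
  | @br N N' i j a b ha hb iha ihb =>
    have hwa := sp_mono (S' := {l : List (Let m) | l ≠ []}) (fun l hl => hl.1)
      (BW_words P e h1 h2 h3 ha)
    have hwb := sp_mono (S' := {l : List (Let m) | l ≠ []}) (fun l hl => hl.1)
      (BW_words P e h1 h2 h3 hb)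
    rw [h1, brT_of (h2 _ _ (BW_grade P e ha)) (h2 _ _ (BW_grade P e hb)), map_sub, map_smul,
      rr_mul _ _ _ hwb, rr_mul _ _ _ hwa, iha, ihb, BW_adT P e h1 h2 h3 ha, BW_adT P e h1 h2 h3 hb,
      map_smul, map_smul, smul_comm _ (N : ℝ) (D.bracket b a)]
    have := D.antisymm _ _ _ (BW_grade P e ha) _ (BW_grade P e hb)
    rw [neg_smul] at this
    rw [sub_eq_add_neg, ← smul_neg, ← this, ← add_smul]
    push_cast; rw [add_comm]

lemma rt_iota (a : D.carrier) : rt P e (ι a) = a := by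
  refine BW_ext P e (f := (rt P e).comp ι) (f' := LinearMap.id) ?_ a
  intro N i a h
  have hN := BW_pos P e h
  rw [LinearMap.comp_apply, rt_wt P e (sp_mono (fun l hl => hl.2) (BW_words P e h1 h2 h3 h)),
    BW_rr P e h1 h2 h3 h, smul_smul, inv_mul_cancel₀ (by positivity), one_smul]; rfl

omit h1 h2 h3 in
lemma sgn_odd (a b : ℕ) : (-1 : ℝ) ^ ((1 - 2 * (a : ℤ)) * (1 - 2 * (b : ℤ))) = -1 := by
  refine Odd.neg_one_zpow ⟨- a - b + 2 * a * b, by ring⟩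

omit h1 h2 h3 in
lemma sgn_odd1 (a : ℕ) : (-1 : ℝ) ^ (1 - 2 * (a : ℤ)) = -1 := by
  refine Odd.neg_one_zpow ⟨- a, by ring⟩

lemma iota_d_JJ (α : Fin m →₀ ℕ) : ι (D.d (JJ P e α)) = dT (ell α) := by
  rw [d_JJ, map_smul, map_sum, dT_ell]
  have : ∀ p ∈ Finset.HasAntidiagonal.antidiagonal α, ι (D.bracket (JJ P e p.1) (JJ P e p.2)) =
      ell p.1 * ell p.2 + ell p.2 * ell p.1 := by
    intro p _
    rw [h1, h3, h3, brT_of (ell_gT _) (ell_gT _), sgn_odd]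
    simp
  rw [Finset.sum_congr rfl this, Finset.sum_add_distrib, sum_ad_swap α (fun a b => ell a * ell b),
    ← two_smul ℝ, smul_smul]
  simp [del]

lemma iota_d (a : D.carrier) : ι (D.d a) = dT (ι a) := by
  refine BW_ext P e (f := ι.comp D.d) (f' := dT.comp ι) ?_ a
  intro N i a h
  simp only [LinearMap.comp_apply]
  induction h with
  | gen α => rw [iota_d_JJ P e h1 h2 h3, h3]
  | br ha hb iha ihb =>
    rw [D.leibniz _ _ (BW_grade P e ha), map_add, map_smul, h1, h1, h1, iha, ihb,
      dT_brT (h2 _ _ (BW_grade P e ha)) (h2 _ _ (BW_grade P e hb))]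

end iota

lemma br_symm (α β : Fin m →₀ ℕ) :
    D.bracket (JJ P e α) (JJ P e β) = D.bracket (JJ P e β) (JJ P e α) := by
  rw [D.antisymm _ _ _ (JJ_grade P e α) _ (JJ_grade P e β), sgn_odd]; simp

lemma adT_del (α : Fin m →₀ ℕ) : adT P e (del α) = D.bracket (D.d (JJ P e α)) := by
  rw [d_JJ, map_smul, map_sum, del, map_sum]
  have : ∀ p ∈ Finset.HasAntidiagonal.antidiagonal α,
      D.bracket (D.bracket (JJ P e p.1) (JJ P e p.2)) =
      adT P e (ell p.1 * ell p.2) + adT P e (ell p.2 * ell p.1) := by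
    intro p _
    ext c
    rw [adT_mul, adT_mul]
    simp only [adT_ell, LinearMap.add_apply, LinearMap.comp_apply]
    rw [D.jacobi _ _ _ (JJ_grade P e p.1) _ (JJ_grade P e p.2), sgn_odd]
    simp
  rw [Finset.sum_congr rfl this, Finset.sum_add_distrib,
    sum_ad_swap α (fun a b => adT P e (ell a * ell b)), ← two_smul ℝ, smul_smul]
  simp

lemma rr_ell (α : Fin m →₀ ℕ) : rr P e (ell α) = (α.degree : ℝ) • JJ P e α := by
  by_cases h : α = 0
  · subst h; simp
  · rw [ell_of h, rr_W]; rfl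

lemma ell_ne (α : Fin m →₀ ℕ) : ell α ∈ sp {l : List (Let m) | l ≠ []} := by
  by_cases h : α = 0
  · subst h; simp
  · rw [ell_of h]; exact W_mem_sp (by simp)

lemma rr_del (α : Fin m →₀ ℕ) : rr P e (del α) = (α.degree : ℝ) • D.d (JJ P e α) := by
  have hs : ∑ p ∈ Finset.HasAntidiagonal.antidiagonal α,
      (p.2.degree : ℝ) • D.bracket (JJ P e p.1) (JJ P e p.2) =
      ∑ p ∈ Finset.HasAntidiagonal.antidiagonal α,
      (p.1.degree : ℝ) • D.bracket (JJ P e p.1) (JJ P e p.2) := by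
    rw [← sum_ad_swap α (fun a b => (a.degree : ℝ) • D.bracket (JJ P e a) (JJ P e b))]
    exact Finset.sum_congr rfl fun p _ => by rw [br_symm]
  have h0 : rr P e (del α) = ∑ p ∈ Finset.HasAntidiagonal.antidiagonal α,
      (p.2.degree : ℝ) • D.bracket (JJ P e p.1) (JJ P e p.2) := by
    rw [del, map_sum]
    refine Finset.sum_congr rfl fun p _ => ?_
    rw [rr_mul P e _ (ell_ne _), adT_ell, rr_ell, map_smul]
  have h2 : (2 : ℝ) • rr P e (del α) = (2 : ℝ) • (α.degree : ℝ) • D.d (JJ P e α) := by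
    rw [two_smul, d_JJ, smul_comm (α.degree : ℝ), smul_smul]
    norm_num only [one_smul]
    conv_lhs => rw [h0]
    conv_lhs => enter [1]; rw [hs]
    rw [← Finset.sum_add_distrib, Finset.smul_sum]
    refine Finset.sum_congr rfl fun p hp => ?_
    rw [← Finset.HasAntidiagonal.mem_antidiagonal.1 hp, ← add_smul, map_add]
    push_cast; rfl
  exact smul_right_injective _ (two_ne_zero) h2

lemma dT_ne {l : List (Let m)} (h : l ≠ []) : dT (W l) ∈ sp {l : List (Let m) | l ≠ []} := by
  refine sp_mono ?_ (dT_W_mem l)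
  rintro w ⟨_, _, hw⟩ rfl
  cases l with
  | nil => exact h rfl
  | cons α l =>
    have := deg_pos α
    rw [wt_cons] at hw
    simp [wt] at hw
    omega

lemma rr_dT (l : List (Let m)) : rr P e (dT (W l)) = D.d (rW P e l) := by
  induction l with
  | nil => rw [dT_nil]; simp [rW]
  | cons α l ih =>
    cases l with
    | nil => rw [← ell_coe, dT_ell, rr_del, rW, map_smul]
    | cons β l =>
      rw [dT_cons, map_sub, rr_mul P e _ (dT_ne (by simp)), rr_mul P e _ (W_mem_sp (by simp)), ih,
        adT_del, rr_W, rW_cons P e α (by simp), D.leibniz _ _ (JJ_grade P e α.1), sgn_odd1,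
        ← ell_coe, adT_ell]
      simp [sub_eq_add_neg]

lemma rt_dT (t : T m) : rt P e (dT t) = D.d (rt P e t) := by
  refine sp_eq (f := (rt P e).comp dT) (f' := D.d.comp (rt P e)) ?_ (mem_top t)
  intro l _
  simp only [LinearMap.comp_apply]
  rw [rt_wt P e (N := wt l) (sp_mono (fun w hw => hw.2.2) (dT_W_mem l)), rr_dT, rt_W, map_smul]

lemma rW_grade (l : List (Let m)) : rW P e l ∈ D.grade (-(cost l : ℤ)) := by
  induction l with
  | nil => exact Submodule.zero_mem _
  | cons α l ih =>
    have hd := deg_pos α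
    have hc : -(cost (α :: l) : ℤ) = (1 - 2 * (α.1.degree : ℤ)) + -(cost l : ℤ) := by
      rw [cost_cons]; omega
    rw [hc]
    cases l with
    | nil =>
      rw [rW]
      have := JJ_grade P e α.1
      simpa [cost] using Submodule.smul_mem _ _ this
    | cons β l => exact D.bracket_grade _ _ _ (JJ_grade P e α.1) _ ih

lemma rt_grade {p : ℕ} {S : Set (List (Let m))} (hS : ∀ l ∈ S, cost l = p) {t : T m} (ht : t ∈ sp S) :
    rt P e t ∈ D.grade (-(p : ℤ)) := by
  refine sp_map ?_ ht
  intro l hl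
  rw [rt_W, ← hS l hl]
  exact Submodule.smul_mem _ _ (rW_grade P e l)

end
end FreeCob

namespace FreeCob
variable {m : ℕ}
section
variable {g : Type} [LieRing g] [LieAlgebra ℝ g] {D : DGLA} (P : FreeSgPresentation g D)
  (e : Module.Basis (Fin m) ℝ g)

/-- the degree one generators as a linear map -/
def J0 : g →ₗ[ℝ] D.carrier := (P.J 0).toLinearMap (fun _ => 0) 0

lemma fin1 {X : Type*} (v : Fin (0 + 1) → X) : v = fun _ => v 0 := by
  funext j
  have : j = 0 := Fin.ext (by omega)
  rw [this]

lemma J0_apply (x : g) : J0 P x = P.J 0 (fun _ => x) := by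
  have : Function.update (fun _ : Fin (0 + 1) => (0 : g)) 0 x = fun _ => x := by
    rw [fin1 (Function.update (fun _ : Fin (0 + 1) => (0 : g)) 0 x)]
    simp
  rw [J0, MultilinearMap.toLinearMap_apply, this]

lemma J0_grade (x : g) : J0 P x ∈ D.grade (-1) := by
  rw [J0_apply]
  simpa using P.J_grade 0 (fun _ => x)

lemma JJ_one {α : Fin m →₀ ℕ} (h : α.degree = 1) : ∃ x, JJ P e α = J0 P x := by
  refine ⟨∑ f ∈ fib 0 α, e (f 0), ?_⟩
  rw [JJ_eq P e (k := 0) h, map_sum]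
  refine Finset.sum_congr rfl fun f _ => ?_
  rw [J0_apply, fin1 (e ∘ f)]; rfl

lemma J0_br (x y : g) : ∃ z ∈ D.grade (-3), D.d z = D.bracket (J0 P x) (J0 P y) := by
  have hg : ∀ x : g, P.J 1 (fun _ => x) ∈ D.grade (-3) := fun x => by
    simpa using P.J_grade 1 (fun _ => x)
  have hd : ∀ x : g, D.d (P.J 1 (fun _ => x)) = (1 / 2 : ℝ) • D.bracket (J0 P x) (J0 P x) := fun x => by
    have := P.d_J 0 x
    simpa [J0_apply] using this
  refine ⟨P.J 1 (fun _ => x + y) - P.J 1 (fun _ => x) - P.J 1 (fun _ => y),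
    Submodule.sub_mem _ (Submodule.sub_mem _ (hg _) (hg _)) (hg _), ?_⟩
  have hs : D.bracket (J0 P y) (J0 P x) = D.bracket (J0 P x) (J0 P y) := by
    rw [D.antisymm _ _ _ (J0_grade P y) _ (J0_grade P x)]; simp
  rw [map_sub, map_sub, hd, hd, hd]
  simp only [map_add, LinearMap.add_apply, hs]
  module

lemma exact0 (l : List (Let m)) (h0 : exc l = 0) (hl : 2 ≤ l.length) :
    ∃ z ∈ D.grade (-(cost l : ℤ) - 1), D.d z = rW P e l := by
  induction l with
  | nil => simp at hl
  | cons α l ih =>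
    have hα := deg_pos α
    rw [exc_cons] at h0
    have h1 : α.1.degree = 1 := by omega
    obtain ⟨x, hx⟩ := JJ_one P e h1
    have hcα : cost (α :: l) = 1 + cost l := by rw [cost_cons, h1]
    cases l with
    | nil => simp at hl
    | cons β l =>
      rw [rW, hx]
      cases l with
      | nil =>
        have hβ := deg_pos β
        rw [exc_cons] at h0
        have h2 : β.1.degree = 1 := by omega
        obtain ⟨y, hy⟩ := JJ_one P e h2
        obtain ⟨z, hz, hd⟩ := J0_br P x y
        refine ⟨z, ?_, ?_⟩
        · rw [hcα, cost_cons, h2]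
          simpa [cost] using hz
        · rw [hd, rW, h2, hy]; simp
      | cons γ l =>
        obtain ⟨z, hz, hd⟩ := ih (by omega) (by simp)
        refine ⟨- D.bracket (J0 P x) z, ?_, ?_⟩
        · refine Submodule.neg_mem _ ?_
          have := D.bracket_grade _ _ _ (J0_grade P x) _ hz
          convert this using 2
          rw [hcα]; push_cast; ring
        · rw [map_neg, D.leibniz _ _ (J0_grade P x), hd, J0_apply, P.d_J_one]
          simp

lemma exc_le_wt (l : List (Let m)) : exc l ≤ wt l := by
  induction l with
  | nil => simp [exc]
  | cons α l ih => rw [exc_cons, wt_cons]; omega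

/-- coefficient of the one letter word -/
def phi (i : Fin m) : T m →ₗ[ℝ] ℝ := by
  classical exact lin fun l => if l = [eL i] then 1 else 0

lemma phi_W (i : Fin m) (l : List (Let m)) [Decidable (l = [eL i])] :
    phi i (W l) = if l = [eL i] then 1 else 0 := by
  classical
  rw [phi, lin_W]
  congr

lemma phi_dT (i : Fin m) (t : T m) : phi i (dT t) = 0 := by
  classical
  refine sp_eq (f := (phi i).comp dT) (f' := 0) ?_ (mem_top t)
  intro l _
  rw [LinearMap.comp_apply, LinearMap.zero_apply]
  refine sp_eq (f := phi i) (f' := 0) ?_ (dT_W_mem l)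
  rintro w ⟨_, h1, h2⟩
  rw [phi_W, if_neg, LinearMap.zero_apply]
  rintro rfl
  have e1 : exc [eL i] = 0 := by simp [exc, eL]
  have e2 : wt [eL i] = 1 := by simp [wt, eL]
  rw [e1] at h1
  rw [e2] at h2
  cases l with
  | nil => simp [wt] at h2
  | cons α l =>
    have := deg_pos α
    have := exc_le_wt l
    rw [exc_cons] at h1
    rw [wt_cons] at h2
    omega

lemma phi_Jp (i : Fin m) (x : g) (h : phi i (Jp e 0 (fun _ => x)) = 0) : e.repr x i = 0 := by
  classical
  rw [Jp_apply, map_sum, Finset.sum_eq_single (fun _ => i)] at h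
  · rw [map_smul, map_smul] at h
    have hc : cnt (fun _ : Fin (0 + 1) => i) = Finsupp.single i 1 := by simp [cnt]
    have h2 : phi i (ell (cnt (fun _ : Fin (0 + 1) => i))) = 1 := by
      rw [hc, show (Finsupp.single i 1 : Fin m →₀ ℕ) = (eL i).1 from rfl, ell_coe, phi_W, if_pos rfl]
    have h3 := fib_card_ne (fun _ : Fin (0 + 1) => i)
    rw [h2] at h
    simpa [h3] using h
  · intro f _ hf
    have hc : cnt f = (eL (f 0)).1 := by simp [cnt, eL]
    rw [hc, ell_coe, map_smul, map_smul, phi_W, if_neg]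
    · simp
    · intro hh
      apply hf
      rw [fin1 f]
      have := congrArg Subtype.val (List.cons.inj hh).1
      have h4 := Finsupp.single_left_injective (one_ne_zero) this
      rw [h4]
  · intro h; exact absurd (Finset.mem_univ _) h

lemma dT_exc0 {t : T m} {n : ℤ} (ht : t ∈ sp {l : List (Let m) | -(cost l : ℤ) = n ∧ exc l = 0}) :
    dT t = 0 := by
  refine sp_eq (f := dT) (f' := 0) ?_ ht
  rintro l ⟨_, hl⟩
  rw [LinearMap.zero_apply]
  refine sp_eq (f := LinearMap.id) (f' := 0) ?_ (dT_W_mem l)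
  rintro w ⟨_, h, _⟩
  omega

lemma closed_decomp {n : ℤ} {a : D.carrier} (ha : a ∈ D.closed n) :
    ∃ t0 ∈ sp {l : List (Let m) | -(cost l : ℤ) = n ∧ exc l = 0}, a - rt P e t0 ∈ D.exact n := by
  obtain ⟨ι, h1, h2, h3'⟩ := exists_iota P e
  have h3 := iota_JJ P e h3'
  obtain ⟨hag, had⟩ := ha
  have had : D.d a = 0 := had
  have hr := rt_iota P e h1 h2 h3 a
  have ht := gT_iff.1 (h2 n a hag)
  have hdt : dT (ι a) = 0 := by rw [← iota_d P e h1 h2 h3, had, map_zero]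
  have hsup : sp {l : List (Let m) | -(cost l : ℤ) = n} ≤
      sp {l : List (Let m) | -(cost l : ℤ) = n ∧ exc l = 0} ⊔
      sp {l : List (Let m) | -(cost l : ℤ) = n ∧ 1 ≤ exc l} := by
    refine sp_le fun l hl => ?_
    rcases Nat.eq_zero_or_pos (exc l) with h | h
    · exact Submodule.mem_sup_left (W_mem_sp ⟨hl, h⟩)
    · exact Submodule.mem_sup_right (W_mem_sp ⟨hl, h⟩)
  obtain ⟨t0, ht0, t1, ht1, hs⟩ := Submodule.mem_sup.1 (hsup ht)
  refine ⟨t0, ht0, ?_⟩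
  have hd1 : dT t1 = 0 := by
    rw [← hs, map_add, dT_exc0 ht0, zero_add] at hdt
    exact hdt
  have hrt : a - rt P e t0 = rt P e t1 := by
    rw [← hs, map_add] at hr
    rw [← hr]; abel
  rw [hrt]
  by_cases hn : 0 < n
  · have : t1 = 0 := by
      refine sp_eq (f := LinearMap.id) (f' := 0) ?_ ht1
      rintro w ⟨h, _⟩
      omega
    rw [this, map_zero]
    exact Submodule.zero_mem _
  obtain ⟨p, rfl⟩ : ∃ p : ℕ, n = -(p : ℤ) := ⟨(-n).toNat, by omega⟩
  have ht1' : t1 ∈ sp (SU m p 1) := by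
    refine sp_mono ?_ ht1
    rintro w ⟨h, h'⟩
    exact ⟨by omega, h'⟩
  obtain ⟨f, hf, hfd⟩ := acyclic_T ht1' hd1
  refine ⟨rt_grade P e (fun l hl => hl.1) ht1', rt P e f, ?_, ?_⟩
  · have := rt_grade P e (fun l hl => hl.1) hf
    have hh : -(p : ℤ) - 1 = -((p + 1 : ℕ) : ℤ) := by push_cast; ring
    rw [hh]; exact this
  · rw [← rt_dT, hfd]

end
end FreeCob

open FreeCob

/-- Proposition `lemma`.  For a finite-dimensional real Lie algebra `g`,
the cohomology of the free graded Lie algebra `𝓛(S⁺g)` with differential determined by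
`d i(x) = [i(x), i(x)]/2` is concentrated in degree `−1`, where it is isomorphic to
`g = S¹g ⊂ S⁺g`: all generators `𝓘(x)`, `x ∈ g`, are closed; the induced linear map
`g → H^{−1}(𝓛(S⁺g))`, `x ↦ [𝓘(x)]`, is injective and surjective; and in every other
degree every closed element is exact. -/
theorem freeLie_cohomology (g : Type) [LieRing g] [LieAlgebra ℝ g] [FiniteDimensional ℝ g]
    (D : DGLA) (P : FreeSgPresentation g D) :
    (∀ x : g, D.d (P.J 0 (fun _ => x)) = 0) ∧
    (∀ x : g, P.J 0 (fun _ => x) ∈ D.exact (-1) → x = 0) ∧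
    (∀ a ∈ D.closed (-1), ∃ x : g, a - P.J 0 (fun _ => x) ∈ D.exact (-1)) ∧
    (∀ n : ℤ, n ≠ -1 → D.closed n ≤ D.exact n) := by
  let e := Module.finBasis ℝ g
  refine ⟨P.d_J_one, ?_, ?_, ?_⟩
  · rintro x ⟨_, b, _, hb⟩
    obtain ⟨ι, h1, h2, h3'⟩ := exists_iota P e
    have h3 := iota_JJ P e h3'
    refine (e.ext_elem_iff).2 fun i => ?_
    rw [map_zero, Finsupp.zero_apply]
    refine phi_Jp e i x ?_
    rw [← h3', ← hb, iota_d P e h1 h2 h3, phi_dT]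
  · intro a ha
    obtain ⟨t0, ht0, hex⟩ := closed_decomp P e ha
    have hJ : rt P e t0 ∈ LinearMap.range (J0 P) := by
      refine sp_map ?_ ht0
      rintro l ⟨hc, he⟩
      match l with
      | [] => simp [cost] at hc
      | [α] =>
        have hα := deg_pos α
        rw [exc_cons] at he
        obtain ⟨x, hx⟩ := JJ_one P e (α := α.1) (by omega)
        rw [rt_W, rW, hx]
        exact Submodule.smul_mem _ _ (Submodule.smul_mem _ _ ⟨x, rfl⟩)
      | α :: β :: l =>
        have hα := deg_pos α
        have hβ := deg_pos β
        rw [cost_cons, cost_cons] at hc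
        omega
    obtain ⟨x, hx⟩ := hJ
    refine ⟨x, ?_⟩
    rw [← J0_apply, hx]
    exact hex
  · intro n hn a ha
    obtain ⟨t0, ht0, hex⟩ := closed_decomp P e ha
    have hJ : rt P e t0 ∈ D.exact n := by
      refine sp_map ?_ ht0
      rintro l ⟨hc, he⟩
      rw [rt_W]
      refine Submodule.smul_mem _ _ ?_
      have hg := rW_grade P e l
      rw [hc] at hg
      match l with
      | [] => exact Submodule.zero_mem _
      | [α] =>
        have hα := deg_pos α
        rw [exc_cons] at he
        rw [cost_cons] at hc
        simp [cost] at hc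
        omega
      | α :: β :: l =>
        obtain ⟨z, hz, hd⟩ := exact0 P e (α :: β :: l) he (by simp)
        rw [hc] at hz
        exact ⟨hg, z, hz, hd⟩
    have := Submodule.add_mem _ hex hJ
    simpa using this
end
end
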